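/- arXiv:2303.05348 — 3 statements merged into one kernel-verified Lean document; each statement's English description precedes it below -/
import Mathlib

section
/- Let μ ≥ 0. There exist constants c₁, c₂ > 0 such that for all r, s, t > 0, c₁ ≤ (2t)^{−1}(rs)^{−μ} e^{−(r²+s²)/(4t)} I_μ(rs/(2t)) / [ (1 ∧ rs/t)^{μ+1/2} (rs)^{−μ−1/2} t^{−1/2} e^{−(r−s)²/(4t)} ] ≤ c₂. -/
open MeasureTheory Set Real

/-- The modified Bessel function of the first kind `I_μ`, for positive real argument. -/
noncomputable def besselI (μ z : ℝ) : ℝ :=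
  (z / 2) ^ μ * ∑' k : ℕ, (z ^ 2 / 4) ^ k / (Nat.factorial k * Real.Gamma (k + μ + 1))

/-!
With `2 ^ (2k) k! Γ(k + 1/2) = √π (2k)!`, the `k`-th term of the power series of `(z/2)^(-μ) I_μ(z)`
is, up to constants independent of `k` and `z`, `z ^ (2k) / (2k)! * (k + 1) ^ (-(μ + 1/2))`.
Hence the series is a moment of order `ν = -(μ + 1/2)` of `k + 1` under the weights
`z ^ (2k) / (2k)!`, whose total mass is `cosh z`. These weights concentrate at `k ≈ z / 2`: their
exponential moments are again values of `cosh`, and they bound every moment from above by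
`(1 ∨ 2z) ^ ν e ^ z`, for `ν` of either sign. By Cauchy–Schwarz the product of the moments of orders
`ν` and `-ν` is at least `cosh² z`, so the upper bound for `-ν` is a lower bound for `ν`.
-/

open Asymptotics Filter Topology
open scoped Nat

section Comparison

variable {α ι : Type*} {s : Set α}

lemma exists_pos_bounds_of_isTheta {f g : α → ℝ} (hf : ∀ x ∈ s, 0 ≤ f x) (hg : ∀ x ∈ s, 0 ≤ g x)
    (h : f =Θ[𝓟 s] g) :
    ∃ c C : ℝ, 0 < c ∧ 0 < C ∧ ∀ x ∈ s, c * g x ≤ f x ∧ f x ≤ C * g x := by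
  obtain ⟨C, hC, hfg⟩ := h.1.exists_pos
  obtain ⟨D, hD, hgf⟩ := h.2.exists_pos
  refine ⟨D⁻¹, C, inv_pos.2 hD, hC, fun x hx => ⟨?_, ?_⟩⟩
  · have := isBigOWith_principal.1 hgf x hx
    rw [norm_of_nonneg (hf x hx), norm_of_nonneg (hg x hx)] at this
    rwa [inv_mul_le_iff₀ hD]
  · have := isBigOWith_principal.1 hfg x hx
    rwa [norm_of_nonneg (hf x hx), norm_of_nonneg (hg x hx)] at this

lemma isTheta_top_of_tendsto_div {𝕜 : Type*} [NormedField 𝕜] {f g : ℕ → 𝕜} {c : 𝕜}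
    (hf : ∀ n, f n ≠ 0) (hg : ∀ n, g n ≠ 0) (hc : c ≠ 0)
    (h : Tendsto (fun n => f n / g n) atTop (𝓝 c)) : f =Θ[⊤] g := by
  have h_atTop : f =Θ[atTop] g := (isTheta_of_div_tendsto_nhds_ne_zero h hc).symm
  exact ⟨isBigO_top.2 ((isBigO_nat_atTop_iff fun n hn => absurd hn (hg n)).1 h_atTop.1),
    isBigO_top.2 ((isBigO_nat_atTop_iff fun n hn => absurd hn (hf n)).1 h_atTop.2)⟩

variable {w : α → ι → ℝ} {u v : ι → ℝ}

lemma isBigO_tsum_mul_of_isBigO (hw : ∀ a ∈ s, ∀ i, 0 ≤ w a i) (hu : ∀ i, 0 ≤ u i)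
    (hv : ∀ i, 0 ≤ v i) (hwv : ∀ a ∈ s, Summable fun i => w a i * v i) (huv : u =O[⊤] v) :
    (fun a => ∑' i, w a i * u i) =O[𝓟 s] fun a => ∑' i, w a i * v i := by
  obtain ⟨C, hC⟩ := isBigO_top.1 huv
  refine isBigO_principal.2 ⟨C, fun a ha => ?_⟩
  have h_nonneg i : 0 ≤ w a i * u i := mul_nonneg (hw a ha i) (hu i)
  have h_le i : w a i * u i ≤ C * (w a i * v i) := by
    have hCi : u i ≤ C * v i := by
      simpa only [norm_of_nonneg (hu i), norm_of_nonneg (hv i)] using hC i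
    calc w a i * u i ≤ w a i * (C * v i) := mul_le_mul_of_nonneg_left hCi (hw a ha i)
      _ = C * (w a i * v i) := by ring
  rw [norm_of_nonneg (tsum_nonneg h_nonneg),
    norm_of_nonneg (tsum_nonneg fun i => mul_nonneg (hw a ha i) (hv i)), ← tsum_mul_left]
  have h_summable := (hwv a ha).mul_left C
  exact (h_summable.of_nonneg_of_le h_nonneg h_le).tsum_le_tsum h_le h_summable

lemma isTheta_tsum_mul_of_isTheta (hw : ∀ a ∈ s, ∀ i, 0 ≤ w a i) (hu : ∀ i, 0 ≤ u i)
    (hv : ∀ i, 0 ≤ v i) (hwv : ∀ a ∈ s, Summable fun i => w a i * v i) (huv : u =Θ[⊤] v) :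
    (fun a => ∑' i, w a i * u i) =Θ[𝓟 s] fun a => ∑' i, w a i * v i := by
  refine ⟨isBigO_tsum_mul_of_isBigO hw hu hv hwv huv.1,
    isBigO_tsum_mul_of_isBigO hw hv hu (fun a ha => ?_) huv.2⟩
  refine summable_of_isBigO (hwv a ha) (IsBigO.mono ?_ le_top)
  exact (isBigO_refl (w a) ⊤).mul huv.1

lemma sq_le_mul_of_hasSum {f g h : ι → ℝ} {F G H : ℝ} (hf : HasSum f F) (hg : HasSum g G)
    (hh : HasSum h H) (hf_nonneg : ∀ i, 0 ≤ f i) (hg_nonneg : ∀ i, 0 ≤ g i)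
    (hfg : ∀ i, h i ^ 2 ≤ f i * g i) : H ^ 2 ≤ F * G :=
  le_of_tendsto_of_tendsto' (Tendsto.pow hh 2) (Tendsto.mul hf hg) fun t =>
    Finset.sum_sq_le_sum_mul_sum_of_sq_le_mul t (fun i _ => hf_nonneg i) (fun i _ => hg_nonneg i)
      fun i _ => hfg i

end Comparison

section CoshMoment

lemma rpow_le_mul_exp {m y : ℝ} (hm : 0 ≤ m) (hy : 0 ≤ y) : y ^ m ≤ (1 + m) ^ m * exp y := by
  have h_lin : y ≤ (1 + m) * exp (y / (1 + m)) := by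
    rw [← div_le_iff₀' (by positivity)]
    linarith [add_one_le_exp (y / (1 + m))]
  calc y ^ m ≤ ((1 + m) * exp (y / (1 + m))) ^ m := by gcongr
    _ = (1 + m) ^ m * exp (y * (m / (1 + m))) := by
      rw [mul_rpow (by positivity) (exp_nonneg _), ← exp_mul]
      congr 2
      ring
    _ ≤ (1 + m) ^ m * exp y := by
      gcongr
      exact mul_le_of_le_one_right hy ((div_le_one (by positivity)).2 (by linarith))

-- The second exponential is for `ν < 0` and `x ≪ a`, where `(x / a) ^ ν` can be as large as
-- `a ^ |ν|`. Its rates keep its sum `exp (a / 4 - 2) * cosh (z / e)` against the terms of `cosh z`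
-- at most `e ^ z` when `a = 1 ∨ 2z`.
lemma exists_rpow_div_le_exp_add_exp (ν : ℝ) :
    ∃ C > 0, ∀ x a : ℝ, 1 ≤ x → 0 < a →
      (x / a) ^ ν ≤ C * (exp (2 * x / a) + exp (a / 4 - 2 * x)) := by
  rcases le_total 0 ν with hν | hν
  · refine ⟨(1 + ν) ^ ν, by positivity, fun x a hx ha => ?_⟩
    have hy : 0 ≤ x / a := by positivity
    calc (x / a) ^ ν ≤ (1 + ν) ^ ν * exp (x / a) := rpow_le_mul_exp hν hy
      _ ≤ (1 + ν) ^ ν * exp (2 * x / a) := by gcongr; linarith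
      _ ≤ _ := by gcongr; linarith [exp_pos (a / 4 - 2 * x)]
  obtain ⟨m, hm, rfl⟩ : ∃ m : ℝ, 0 ≤ m ∧ ν = -m := ⟨-ν, by linarith, by ring⟩
  refine ⟨50 ^ m * (1 + m) ^ m, by positivity, fun x a hx ha => ?_⟩
  have h_scale : (x / a) ^ (-m) = 50 ^ m * (a / (50 * x)) ^ m := by
    rw [rpow_neg (by positivity), ← inv_rpow (by positivity),
      ← mul_rpow (by norm_num) (by positivity)]
    congr 1
    field_simp
  rw [h_scale, mul_assoc]
  gcongr
  refine (rpow_le_mul_exp hm (by positivity)).trans ?_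
  gcongr
  rcases le_total a (10 * x) with h | h
  · have : a / (50 * x) ≤ 2 * x / a := by
      rw [div_le_div_iff₀ (by positivity) ha]
      nlinarith
    linarith [exp_le_exp.2 this, exp_pos (a / 4 - 2 * x)]
  · have : a / (50 * x) ≤ a / 50 := by
      gcongr
      linarith
    have : a / (50 * x) ≤ a / 4 - 2 * x := by linarith
    linarith [exp_le_exp.2 this, exp_pos (2 * x / a)]

/-- The moment `∑ₖ (k + 1) ^ ν z ^ (2k) / (2k)!` of real order `ν` of `k + 1` under the terms of the
power series of `cosh z`, taken as unnormalised weights: up to constants, the series of `I_μ` is one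
of these. The shift by one keeps moments of negative order meaningful at `k = 0`. -/
noncomputable def coshMoment (ν z : ℝ) : ℝ :=
  ∑' k : ℕ, z ^ (2 * k) / (2 * k)! * (k + 1 : ℝ) ^ ν

lemma hasSum_cosh_term_mul_exp (θ z : ℝ) :
    HasSum (fun k : ℕ => z ^ (2 * k) / (2 * k)! * exp (2 * θ * (k + 1)))
      (exp (2 * θ) * cosh (exp θ * z)) := by
  refine ((hasSum_cosh (exp θ * z)).mul_left (exp (2 * θ))).congr_fun fun k => ?_
  have h_exp : exp (2 * θ * (k + 1)) = exp (2 * θ) * exp θ ^ (2 * k) := by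
    rw [← exp_nat_mul, ← exp_add]
    congr 1
    push_cast
    ring
  rw [h_exp, mul_pow]
  ring

lemma cosh_term_nonneg (z : ℝ) (k : ℕ) : 0 ≤ z ^ (2 * k) / (2 * k)! :=
  div_nonneg ((even_two_mul k).pow_nonneg z) (Nat.cast_nonneg _)

lemma exists_cosh_term_mul_rpow_le (ν : ℝ) :
    ∃ C > 0, ∀ a z : ℝ, 0 < a → ∀ k : ℕ, z ^ (2 * k) / (2 * k)! * (k + 1 : ℝ) ^ ν ≤
      C * a ^ ν * (z ^ (2 * k) / (2 * k)! * exp (2 * a⁻¹ * (k + 1)) +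
        exp (a / 4) * (z ^ (2 * k) / (2 * k)! * exp (2 * (-1) * (k + 1)))) := by
  obtain ⟨C, hC, h⟩ := exists_rpow_div_le_exp_add_exp ν
  refine ⟨C, hC, fun a z ha k => ?_⟩
  have h_rpow : (k + 1 : ℝ) ^ ν = a ^ ν * ((k + 1) / a) ^ ν := by
    rw [← mul_rpow ha.le (by positivity), mul_div_cancel₀ _ ha.ne']
  calc z ^ (2 * k) / (2 * k)! * (k + 1 : ℝ) ^ ν
      ≤ z ^ (2 * k) / (2 * k)! *
          (a ^ ν * (C * (exp (2 * (k + 1) / a) + exp (a / 4 - 2 * (k + 1))))) := by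
        rw [h_rpow]
        gcongr
        · exact cosh_term_nonneg z k
        · exact h _ a (by linarith [Nat.cast_nonneg (α := ℝ) k]) ha
    _ = _ := by
        rw [show a / 4 - 2 * (k + 1 : ℝ) = a / 4 + 2 * (-1) * (k + 1) by ring, exp_add,
          show 2 * (k + 1 : ℝ) / a = 2 * a⁻¹ * (k + 1) by ring]
        ring

lemma summable_coshMoment (ν z : ℝ) :
    Summable fun k : ℕ => z ^ (2 * k) / (2 * k)! * (k + 1 : ℝ) ^ ν := by
  obtain ⟨C, -, h⟩ := exists_cosh_term_mul_rpow_le ν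
  refine Summable.of_nonneg_of_le (fun k => mul_nonneg (cosh_term_nonneg z k) (by positivity))
    (h 1 z one_pos) ?_
  exact ((hasSum_cosh_term_mul_exp _ z).summable.add
    ((hasSum_cosh_term_mul_exp _ z).summable.mul_left _)).mul_left _

lemma cosh_le_exp {x : ℝ} (hx : 0 ≤ x) : cosh x ≤ exp x := by
  linarith [cosh_eq x, exp_le_exp.2 (by linarith : -x ≤ x)]

lemma cosh_exp_inv_mul_le {a z : ℝ} (ha : 1 ≤ a) (hz : 0 ≤ z) (hza : 2 * z ≤ a) :
    cosh (exp a⁻¹ * z) ≤ exp (1 + z) := by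
  have ha_inv : a⁻¹ ≤ 1 := inv_le_one_of_one_le₀ ha
  have h_exp : exp a⁻¹ ≤ 1 + 2 * a⁻¹ := by
    have ha_abs : |a⁻¹| = a⁻¹ := abs_of_pos (by positivity)
    have := (le_abs_self _).trans (abs_exp_sub_one_le (ha_abs.le.trans ha_inv))
    linarith
  refine (cosh_le_exp (by positivity)).trans (exp_le_exp.2 ?_)
  calc exp a⁻¹ * z ≤ (1 + 2 * a⁻¹) * z := by gcongr
    _ = z + 2 * z / a := by ring
    _ ≤ 1 + z := by linarith [(div_le_one (by linarith)).2 hza]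

lemma exists_coshMoment_le (ν : ℝ) :
    ∃ C > 0, ∀ z, 0 ≤ z → coshMoment ν z ≤ C * (max 1 (2 * z) ^ ν * exp z) := by
  obtain ⟨C, hC, h⟩ := exists_cosh_term_mul_rpow_le ν
  refine ⟨C * (exp 3 + 1), by positivity, fun z hz => ?_⟩
  set a := max 1 (2 * z)
  have ha : 1 ≤ a := le_max_left _ _
  have ha_le : a ≤ 1 + 2 * z := max_le (by linarith) (by linarith)
  have h_sum := ((hasSum_cosh_term_mul_exp a⁻¹ z).add
    ((hasSum_cosh_term_mul_exp (-1) z).mul_left (exp (a / 4)))).mul_left (C * a ^ ν)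
  have h_upper : exp (2 * a⁻¹) * cosh (exp a⁻¹ * z) ≤ exp 3 * exp z := by
    calc exp (2 * a⁻¹) * cosh (exp a⁻¹ * z) ≤ exp 2 * exp (1 + z) := by
          gcongr
          · linarith [inv_le_one_of_one_le₀ ha]
          · exact cosh_exp_inv_mul_le ha hz (le_max_right _ _)
      _ = exp 3 * exp z := by rw [← exp_add, ← exp_add]; ring_nf
  have h_lower : exp (a / 4) * (exp (2 * (-1)) * cosh (exp (-1) * z)) ≤ 1 * exp z := by
    have h_half : exp (-1) * z ≤ z / 2 := by
      nlinarith [exp_neg_one_lt_half]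
    calc exp (a / 4) * (exp (2 * (-1)) * cosh (exp (-1) * z))
        ≤ exp (a / 4) * (exp (2 * (-1)) * exp (z / 2)) := by
          gcongr
          exact (cosh_le_exp (by positivity)).trans (exp_le_exp.2 h_half)
      _ = exp (a / 4 + (2 * (-1) + z / 2)) := by rw [exp_add, exp_add]
      _ ≤ 1 * exp z := by
          rw [one_mul]
          gcongr
          linarith
  calc coshMoment ν z ≤ _ := hasSum_le (h a z (by linarith)) (summable_coshMoment ν z).hasSum h_sum
    _ ≤ C * a ^ ν * (exp 3 * exp z + 1 * exp z) := by gcongr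
    _ = C * (exp 3 + 1) * (a ^ ν * exp z) := by ring

lemma cosh_sq_le_coshMoment_mul (ν z : ℝ) :
    cosh z ^ 2 ≤ coshMoment ν z * coshMoment (-ν) z := by
  have h_nonneg (ρ : ℝ) (k : ℕ) : 0 ≤ z ^ (2 * k) / (2 * k)! * (k + 1 : ℝ) ^ ρ :=
    mul_nonneg (cosh_term_nonneg z k) (by positivity)
  refine sq_le_mul_of_hasSum (summable_coshMoment ν z).hasSum (summable_coshMoment (-ν) z).hasSum
    (hasSum_cosh z) (h_nonneg ν) (h_nonneg (-ν)) fun k => le_of_eq ?_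
  have : (k + 1 : ℝ) ^ ν ≠ 0 := by positivity
  rw [rpow_neg (by positivity)]
  field_simp

lemma coshMoment_nonneg (ν z : ℝ) : 0 ≤ coshMoment ν z :=
  tsum_nonneg fun k => mul_nonneg (cosh_term_nonneg z k) (by positivity)

lemma exists_le_coshMoment (ν : ℝ) :
    ∃ C > 0, ∀ z, 0 ≤ z → max 1 (2 * z) ^ ν * exp z ≤ C * coshMoment ν z := by
  obtain ⟨C, hC, h⟩ := exists_coshMoment_le (-ν)
  refine ⟨4 * C, by positivity, fun z hz => ?_⟩
  set a := max 1 (2 * z)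
  have ha : 0 < a := one_pos.trans_le (le_max_left _ _)
  have h_cosh : exp z / 2 ≤ cosh z := by linarith [cosh_eq z, exp_pos (-z)]
  have h_sq : exp z ^ 2 ≤ 4 * coshMoment ν z * (C * (a ^ (-ν) * exp z)) :=
    calc exp z ^ 2 = 4 * (exp z / 2) ^ 2 := by ring
      _ ≤ 4 * cosh z ^ 2 := by gcongr
      _ ≤ 4 * (coshMoment ν z * coshMoment (-ν) z) := by gcongr; exact cosh_sq_le_coshMoment_mul ν z
      _ ≤ 4 * (coshMoment ν z * (C * (a ^ (-ν) * exp z))) := by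
          gcongr
          exacts [coshMoment_nonneg ν z, h z hz]
      _ = _ := by ring
  have h_pos : 0 < a ^ (-ν) * exp z := by positivity
  refine le_of_mul_le_mul_right ?_ h_pos
  calc a ^ ν * exp z * (a ^ (-ν) * exp z) = exp z ^ 2 := by
        rw [rpow_neg ha.le]
        field_simp
    _ ≤ _ := h_sq
    _ = _ := by ring

lemma coshMoment_isTheta (ν : ℝ) :
    coshMoment ν =Θ[𝓟 (Ici 0)] fun z => max 1 (2 * z) ^ ν * exp z := by
  obtain ⟨C, -, h_le⟩ := exists_coshMoment_le ν
  obtain ⟨D, -, h_ge⟩ := exists_le_coshMoment ν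
  have h_norm z : ‖max 1 (2 * z) ^ ν * exp z‖ = max 1 (2 * z) ^ ν * exp z :=
    norm_of_nonneg (by positivity)
  constructor
  · refine isBigO_principal.2 ⟨C, fun z hz => ?_⟩
    simpa only [h_norm, norm_of_nonneg (coshMoment_nonneg ν z)] using h_le z hz
  · refine isBigO_principal.2 ⟨D, fun z hz => ?_⟩
    simpa only [h_norm, norm_of_nonneg (coshMoment_nonneg ν z)] using h_ge z hz

end CoshMoment

section GammaAsymptotics

lemma GammaSeq_mul_Gamma_nat_add {s : ℝ} (hs : 0 < s) (n : ℕ) :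
    GammaSeq s n * ((n + s) * Gamma (n + s)) = Gamma s * (n ^ s * n !) := by
  have h_prod (m : ℕ) : Gamma (m + s) = (∏ j ∈ Finset.range m, (s + j)) * Gamma s := by
    induction m with
    | zero => simp
    | succ m ih =>
      rw [Finset.prod_range_succ, Nat.cast_succ, add_right_comm, Gamma_add_one (by positivity), ih]
      ring
  rw [← Gamma_add_one (by positivity), add_right_comm, ← Nat.cast_succ, h_prod, GammaSeq]
  field_simp

lemma Gamma_nat_add_isTheta {s : ℝ} (hs : 0 < s) :
    (fun n : ℕ => Gamma (n + s)) =Θ[⊤] fun n : ℕ => n ! * (n + 1 : ℝ) ^ (s - 1) := by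
  have h_Gamma (n : ℕ) : 0 < Gamma (n + s) := Gamma_pos_of_pos (by positivity)
  refine isTheta_top_of_tendsto_div (c := 1) (fun n => (h_Gamma n).ne') (fun n => by positivity)
    one_ne_zero ?_
  have hΓs : Gamma s ≠ 0 := (Gamma_pos_of_pos hs).ne'
  have h_lim : Tendsto (fun n : ℕ => Gamma s / GammaSeq s n * (n / (n + 1 : ℝ)) ^ (s - 1) *
      (n / (n + s))) atTop (𝓝 (Gamma s / Gamma s * 1 ^ (s - 1) * 1)) :=
    ((tendsto_const_nhds.div (GammaSeq_tendsto_Gamma s) hΓs).mul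
      ((tendsto_natCast_div_add_atTop 1).rpow_const (Or.inl one_ne_zero))).mul
      (tendsto_natCast_div_add_atTop s)
  rw [div_self hΓs, one_rpow, one_mul, one_mul] at h_lim
  refine h_lim.congr' ?_
  filter_upwards [eventually_gt_atTop 0] with n hn
  have hn : (0 : ℝ) < n := by exact_mod_cast hn
  have h_seq := GammaSeq_mul_Gamma_nat_add hs n
  have h_ne : GammaSeq s n ≠ 0 := by
    intro h_zero
    rw [h_zero, zero_mul] at h_seq
    exact (by positivity : Gamma s * (n ^ s * n !) ≠ 0) h_seq.symm
  rw [div_rpow hn.le (by positivity), rpow_sub_one hn.ne']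
  field_simp
  linear_combination -h_seq

lemma sqrt_pi_mul_factorial_two_mul (k : ℕ) :
    √π * (2 * k)! = 4 ^ k * k ! * Gamma (k + 1 / 2) := by
  have h := Gamma_mul_Gamma_add_half ((k : ℝ) + 1 / 2)
  rw [show (k : ℝ) + 1 / 2 + 1 / 2 = k + 1 by ring, Gamma_nat_eq_factorial,
    show 2 * ((k : ℝ) + 1 / 2) = (2 * k : ℕ) + 1 by push_cast; ring, Gamma_nat_eq_factorial,
    show 1 - (((2 * k : ℕ) : ℝ) + 1) = -(2 * k : ℕ) by ring,
    rpow_neg (by norm_num), rpow_natCast, pow_mul] at h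
  calc √π * (2 * k)! = 4 ^ k * ((2 * k)! * ((2 ^ 2) ^ k)⁻¹ * √π) := by
        norm_num
        field_simp
    _ = 4 ^ k * k ! * Gamma (k + 1 / 2) := by
        rw [← h]
        ring

lemma factorial_two_mul_isTheta :
    (fun k : ℕ => ((2 * k)! : ℝ)) =Θ[⊤]
      fun k : ℕ => 4 ^ k * k ! * (k ! * (k + 1 : ℝ) ^ (-1 / 2 : ℝ)) := by
  have h_pi : √π ≠ 0 := by positivity
  rw [← isTheta_const_mul_left h_pi]
  simp only [sqrt_pi_mul_factorial_two_mul]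
  have h_Gamma := Gamma_nat_add_isTheta one_half_pos
  rw [show (1 / 2 - 1 : ℝ) = -1 / 2 by norm_num] at h_Gamma
  exact (isTheta_refl _ ⊤).mul h_Gamma

end GammaAsymptotics

section Bessel

variable {μ : ℝ}

lemma besselI_eq_tsum_cosh_term (μ z : ℝ) :
    besselI μ z = (z / 2) ^ μ *
      ∑' k : ℕ, z ^ (2 * k) / (2 * k)! * ((2 * k)! / (4 ^ k * k ! * Gamma (k + μ + 1))) := by
  rw [besselI]
  congr 2 with k
  rw [div_mul_div_cancel₀ (by positivity), div_pow, pow_mul, div_div, mul_assoc]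

lemma besselI_coeff_isTheta (hμ : -1 < μ) :
    (fun k : ℕ => ((2 * k)! : ℝ) / (4 ^ k * k ! * Gamma (k + μ + 1))) =Θ[⊤]
      fun k : ℕ => (k + 1 : ℝ) ^ (-(μ + 1 / 2)) := by
  have h_Gamma := Gamma_nat_add_isTheta (by linarith : 0 < μ + 1)
  simp only [← add_assoc, add_sub_cancel_right] at h_Gamma
  have h := factorial_two_mul_isTheta.div
    ((isTheta_refl (fun k : ℕ => (4 : ℝ) ^ k * k !) ⊤).mul h_Gamma)
  refine h.trans (EventuallyEq.isTheta (Eventually.of_forall fun k => ?_))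
  simp only
  rw [mul_div_mul_left _ _ (by positivity), mul_div_mul_left _ _ (by positivity),
    ← rpow_sub (by positivity)]
  ring_nf

lemma Gamma_nat_add_add_one_pos (hμ : -1 < μ) (k : ℕ) : 0 < Gamma (k + μ + 1) :=
  Gamma_pos_of_pos (by linarith [Nat.cast_nonneg (α := ℝ) k])

lemma besselI_nonneg {z : ℝ} (hμ : -1 < μ) (hz : 0 ≤ z) : 0 ≤ besselI μ z := by
  refine mul_nonneg (by positivity) (tsum_nonneg fun k => div_nonneg (by positivity) ?_)
  exact mul_nonneg (by positivity) (Gamma_nat_add_add_one_pos hμ k).le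

-- The factor 2 in the cut-off is the one for which `2z = rs / t` at `z = rs / (2t)`.
lemma besselI_isTheta (hμ : -1 < μ) :
    besselI μ =Θ[𝓟 (Ioi 0)] fun z => z ^ μ * (max 1 (2 * z) ^ (-(μ + 1 / 2)) * exp z) := by
  have h_prefactor : (fun z : ℝ => (z / 2) ^ μ) =Θ[𝓟 (Ioi 0)] fun z => z ^ μ := by
    have h_const : ((2 : ℝ) ^ μ)⁻¹ ≠ 0 := by positivity
    refine EventuallyEq.trans_isTheta ?_ ((isTheta_const_mul_left h_const).2 (isTheta_refl _ _))
    filter_upwards [mem_principal_self (Ioi (0 : ℝ))] with z hz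
    rw [div_rpow (le_of_lt hz) zero_le_two, div_eq_inv_mul]
  have h_series := (isTheta_tsum_mul_of_isTheta (s := Ioi (0 : ℝ))
    (fun z _ k => cosh_term_nonneg z k)
    (fun k => div_nonneg (by positivity)
      (mul_nonneg (by positivity) (Gamma_nat_add_add_one_pos hμ k).le))
    (fun k => by positivity) (fun z _ => summable_coshMoment _ z) (besselI_coeff_isTheta hμ)).trans
    ((coshMoment_isTheta _).mono (principal_mono.2 Ioi_subset_Ici_self))
  rw [funext (besselI_eq_tsum_cosh_term μ)]
  exact h_prefactor.mul h_series

lemma besselHeatKernel_profile_eq {r s t : ℝ} (μ : ℝ) (hr : 0 < r) (hs : 0 < s) (ht : 0 < t) :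
    (min 1 (r * s / t)) ^ (μ + 1 / 2) * (r * s) ^ (-(μ + 1 / 2)) * t ^ (-(1 : ℝ) / 2)
        * exp (-(r - s) ^ 2 / (4 * t))
      = 2 ^ (μ + 1) * ((2 * t)⁻¹ * (r * s) ^ (-μ) * exp (-(r ^ 2 + s ^ 2) / (4 * t))
        * ((r * s / (2 * t)) ^ μ * (max 1 (2 * (r * s / (2 * t))) ^ (-(μ + 1 / 2))
          * exp (r * s / (2 * t))))) := by
  have hp : 0 < r * s := mul_pos hr hs
  rw [show 2 * (r * s / (2 * t)) = r * s / t by field_simp]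
  have h_exp : exp (-(r - s) ^ 2 / (4 * t)) =
      exp (-(r ^ 2 + s ^ 2) / (4 * t)) * exp (r * s / (2 * t)) := by
    rw [← exp_add]
    congr 1
    field_simp
    ring
  have h_min : min 1 (r * s / t) ^ (μ + 1 / 2) =
      (r * s) ^ (μ + 1 / 2) / t ^ (μ + 1 / 2) * max 1 (r * s / t) ^ (-(μ + 1 / 2)) := by
    have h_max : 0 < max 1 (r * s / t) := one_pos.trans_le (le_max_left _ _)
    have h_mul := min_mul_max 1 (r * s / t)
    rw [one_mul, ← eq_div_iff h_max.ne'] at h_mul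
    rw [h_mul, div_rpow (by positivity) h_max.le, div_rpow hp.le ht.le, rpow_neg h_max.le,
      div_eq_mul_inv]
  have h_t : t ^ (-(1 : ℝ) / 2) = t ^ (μ + 1 / 2) / (t ^ μ * t) := by
    rw [← rpow_add_one ht.ne', ← rpow_sub ht]
    ring_nf
  have h_two : (2 : ℝ) ^ (μ + 1) = 2 ^ μ * 2 := rpow_add_one two_ne_zero μ
  rw [h_exp, h_min, h_t, h_two, div_rpow hp.le (by positivity), mul_rpow zero_le_two ht.le,
    rpow_neg hp.le μ, rpow_neg hp.le (μ + 1 / 2)]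
  field_simp

end Bessel

theorem stmt_13_general (μ : ℝ) (hμ : -1 < μ) :
    ∃ c₁ c₂ : ℝ, 0 < c₁ ∧ 0 < c₂ ∧ ∀ r s t : ℝ, 0 < r → 0 < s → 0 < t →
      c₁ * ((min 1 (r * s / t)) ^ (μ + 1/2) * (r * s) ^ (-(μ + 1/2)) * t ^ (-(1:ℝ)/2)
            * Real.exp (-(r - s) ^ 2 / (4 * t)))
        ≤ (2 * t)⁻¹ * (r * s) ^ (-μ) * Real.exp (-(r ^ 2 + s ^ 2) / (4 * t))
            * besselI μ (r * s / (2 * t))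
      ∧ (2 * t)⁻¹ * (r * s) ^ (-μ) * Real.exp (-(r ^ 2 + s ^ 2) / (4 * t))
            * besselI μ (r * s / (2 * t))
        ≤ c₂ * ((min 1 (r * s / t)) ^ (μ + 1/2) * (r * s) ^ (-(μ + 1/2)) * t ^ (-(1:ℝ)/2)
            * Real.exp (-(r - s) ^ 2 / (4 * t))) := by
  have h_model_nonneg : ∀ z ∈ Ioi (0 : ℝ),
      0 ≤ z ^ μ * (max 1 (2 * z) ^ (-(μ + 1 / 2)) * exp z) := fun z hz => by
    have : 0 < z := hz
    positivity
  obtain ⟨c, C, hc, hC, h⟩ := exists_pos_bounds_of_isTheta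
    (fun z hz => besselI_nonneg hμ (le_of_lt hz)) h_model_nonneg (besselI_isTheta hμ)
  refine ⟨c / 2 ^ (μ + 1), C / 2 ^ (μ + 1), by positivity, by positivity, fun r s t hr hs ht => ?_⟩
  obtain ⟨h_lower, h_upper⟩ := h (r * s / (2 * t)) (show 0 < r * s / (2 * t) by positivity)
  have h_two : (2 : ℝ) ^ (μ + 1) ≠ 0 := by positivity
  have h_cancel (d x y : ℝ) : d / 2 ^ (μ + 1) * (2 ^ (μ + 1) * (x * y)) = x * (d * y) := by
    field_simp
  rw [besselHeatKernel_profile_eq μ hr hs ht, h_cancel, h_cancel]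
  constructor <;> gcongr

/-- Two-sided bound for the one-dimensional Bessel heat kernel: for `μ ≥ 0`
there are `c₁, c₂ > 0` such that for all `r, s, t > 0`,
`(2t)⁻¹ (rs)^{-μ} e^{-(r²+s²)/(4t)} I_μ(rs/(2t))` is comparable to
`(1 ∧ rs/t)^{μ+1/2} (rs)^{-μ-1/2} t^{-1/2} e^{-(r-s)²/(4t)}`. -/
theorem stmt_13 (μ : ℝ) (hμ : 0 ≤ μ) :
    ∃ c₁ c₂ : ℝ, 0 < c₁ ∧ 0 < c₂ ∧ ∀ r s t : ℝ, 0 < r → 0 < s → 0 < t →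
      c₁ * ((min 1 (r * s / t)) ^ (μ + 1/2) * (r * s) ^ (-(μ + 1/2)) * t ^ (-(1:ℝ)/2)
            * Real.exp (-(r - s) ^ 2 / (4 * t)))
        ≤ (2 * t)⁻¹ * (r * s) ^ (-μ) * Real.exp (-(r ^ 2 + s ^ 2) / (4 * t))
            * besselI μ (r * s / (2 * t))
      ∧ (2 * t)⁻¹ * (r * s) ^ (-μ) * Real.exp (-(r ^ 2 + s ^ 2) / (4 * t))
            * besselI μ (r * s / (2 * t))
        ≤ c₂ * ((min 1 (r * s / t)) ^ (μ + 1/2) * (r * s) ^ (-(μ + 1/2)) * t ^ (-(1:ℝ)/2)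
            * Real.exp (-(r - s) ^ 2 / (4 * t))) :=
  stmt_13_general μ (by linarith)
end

section
/- Let d ≥ 1, α ∈ (0,2), p ∈ ((α−1)/2, α), and s ∈ (0, min{(1+2p)/α, 2d/α}). Define the kernel G(x,y) on ℝ₊^d × ℝ₊^d by G(x,y) = |x−y|^{αs/2 − d} (1 ∧ x_d/|x−y| ∧ y_d/|x−y|)^p for |x−y| ≤ max{x_d, y_d}, and by G(x,y) = |x−y|^{αs/2−d} (x_d y_d / |x−y|²)^p · [1 + (|x−y|/max{x_d,y_d})^{max{0, 2p − α(1+s/2)}} + 1_{p = α(1+s/2)/2} ln(|x−y|/max{x_d,y_d})] for max{x_d,y_d} ≤ |x−y|. Then the integral operator with kernel x_d^{−αs/2} G(x,y) is bounded on L²(ℝ₊^d). -/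
open MeasureTheory Set ENNReal

/-- The last (vertical) coordinate of a point in `ℝ^d`. -/
def lastCoord (d : ℕ) (hd : 1 ≤ d) (x : EuclideanSpace ℝ (Fin d)) : ℝ :=
  x ⟨d - 1, by omega⟩

/-- Two-sided Riesz kernel bound function for the Hardy operator on the half-space. -/
noncomputable def rieszBound (d : ℕ) (hd : 1 ≤ d) (α p s : ℝ)
    (x y : EuclideanSpace ℝ (Fin d)) : ℝ :=
  if dist x y ≤ max (lastCoord d hd x) (lastCoord d hd y) then
    dist x y ^ (α * s / 2 - d) *
      (min 1 (min (lastCoord d hd x / dist x y) (lastCoord d hd y / dist x y))) ^ p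
  else
    dist x y ^ (α * s / 2 - d) *
      (lastCoord d hd x * lastCoord d hd y / dist x y ^ 2) ^ p *
      (1 + (dist x y / max (lastCoord d hd x) (lastCoord d hd y))
              ^ (max 0 (2 * p - α * (1 + s / 2)))
         + (if p = α * (1 + s / 2) / 2 then
              Real.log (dist x y / max (lastCoord d hd x) (lastCoord d hd y))
            else 0))

/-!
The bound is a weighted Schur test. Write `β = αs/2`. Off the diagonal `rieszBound` is dominated by
a multiple of the kernel `G = rieszMajorant d β p κ`, for any `κ < min p (α (1 + s/2) - p)`. Since
`G` is invariant under translations along the boundary and homogeneous of degree `β - d` under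
dilations, `∫ G(x, y) y_d ^ (-γ) dy = c(γ) x_d ^ (β - γ)`. Hence the weight `x_d ^ (-1/2)` satisfies
the Schur condition for the kernel `x_d ^ (-β) G(x, y)` in both variables, with constants `c(1/2)`
and `c(β + 1/2)`. These are finite when `β < p + 1/2`, that is `s < (1 + 2p)/α`, and
`β < 1 + p + κ`, which leaves room for the choice of `κ`: near `e_d` the singularity
`|y - e_d| ^ (β - d)` is integrable, and elsewhere `G(e_d, y) y_d ^ (-γ)` is at most a product of
integrable functions of the tangential and the normal variables.
-/

section SchurTest

variable {X Y : Type*} [MeasurableSpace X] [MeasurableSpace Y] {μ : Measure X} {ν : Measure Y}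

lemma lintegral_lintegral_schurFactor_rpow_le {p : ℝ} (hp : 0 < p) {k : X → Y → ℝ≥0∞}
    (hk : ∀ x, Measurable (k x)) {u : X → ℝ≥0∞} {v : Y → ℝ≥0∞} (hv : Measurable v)
    (hu0 : ∀ᵐ x ∂μ, u x ≠ 0) (hut : ∀ᵐ x ∂μ, u x ≠ ∞) {A : ℝ≥0∞}
    (hA : ∀ᵐ x ∂μ, ∫⁻ y, k x y * v y ^ p ∂ν ≤ A * u x ^ p)
    {f : X → ℝ≥0∞} (hf : Measurable f) :
    ∫⁻ x, ∫⁻ y, (k x y ^ (1 / p) * (f x * v y * (u x)⁻¹)) ^ p ∂ν ∂μ ≤ A * ∫⁻ x, f x ^ p ∂μ := by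
  rw [← lintegral_const_mul _ (by fun_prop)]
  refine lintegral_mono_ae ?_
  filter_upwards [hA, hu0, hut] with x hAx hx0 hxt
  have hcancel : ((u x)⁻¹ ^ p) * u x ^ p = 1 := by
    rw [← ENNReal.mul_rpow_of_nonneg _ _ hp.le, ENNReal.inv_mul_cancel hx0 hxt, ENNReal.one_rpow]
  calc ∫⁻ y, (k x y ^ (1 / p) * (f x * v y * (u x)⁻¹)) ^ p ∂ν
      = ∫⁻ y, f x ^ p * (u x)⁻¹ ^ p * (k x y * v y ^ p) ∂ν := by
        refine lintegral_congr fun y => ?_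
        simp only [ENNReal.mul_rpow_of_nonneg _ _ hp.le, ← ENNReal.rpow_mul,
          one_div_mul_cancel hp.ne', ENNReal.rpow_one]
        ring
    _ = f x ^ p * (u x)⁻¹ ^ p * ∫⁻ y, k x y * v y ^ p ∂ν :=
        lintegral_const_mul _ ((hk x).mul (hv.pow_const p))
    _ ≤ f x ^ p * (u x)⁻¹ ^ p * (A * u x ^ p) := by gcongr
    _ = A * f x ^ p * ((u x)⁻¹ ^ p * u x ^ p) := by ring
    _ = A * f x ^ p := by rw [hcancel, mul_one]

/- Hölder's inequality for the splitting
`k f g = (k ^ (1 / p) * (f * v / u)) * (k ^ (1 / q) * (g * u / v))`. -/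
theorem lintegral_lintegral_mul_mul_le_of_schur [SFinite μ] [SFinite ν] {p q : ℝ}
    (hpq : p.HolderConjugate q) {k : X → Y → ℝ≥0∞} (hk : Measurable (Function.uncurry k))
    {u : X → ℝ≥0∞} {v : Y → ℝ≥0∞} (hu : Measurable u) (hv : Measurable v)
    (hu0 : ∀ᵐ x ∂μ, u x ≠ 0) (hut : ∀ᵐ x ∂μ, u x ≠ ∞)
    (hv0 : ∀ᵐ y ∂ν, v y ≠ 0) (hvt : ∀ᵐ y ∂ν, v y ≠ ∞) {A B : ℝ≥0∞}
    (hA : ∀ᵐ x ∂μ, ∫⁻ y, k x y * v y ^ p ∂ν ≤ A * u x ^ p)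
    (hB : ∀ᵐ y ∂ν, ∫⁻ x, k x y * u x ^ q ∂μ ≤ B * v y ^ q)
    {f : X → ℝ≥0∞} {g : Y → ℝ≥0∞} (hf : Measurable f) (hg : Measurable g) :
    ∫⁻ x, ∫⁻ y, k x y * f x * g y ∂ν ∂μ ≤
      A ^ (1 / p) * B ^ (1 / q) * (∫⁻ x, f x ^ p ∂μ) ^ (1 / p) * (∫⁻ y, g y ^ q ∂ν) ^ (1 / q) := by
  have hk' : Measurable fun z : X × Y => k z.1 z.2 := hk
  let F : X × Y → ℝ≥0∞ := fun z => k z.1 z.2 ^ (1 / p) * (f z.1 * v z.2 * (u z.1)⁻¹)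
  let G : X × Y → ℝ≥0∞ := fun z => k z.1 z.2 ^ (1 / q) * (g z.2 * u z.1 * (v z.2)⁻¹)
  have hF : Measurable F := by fun_prop
  have hG : Measurable G := by fun_prop
  have hF_le : ∫⁻ z, F z ^ p ∂μ.prod ν ≤ A * ∫⁻ x, f x ^ p ∂μ := by
    rw [lintegral_prod _ (by fun_prop)]
    exact lintegral_lintegral_schurFactor_rpow_le hpq.pos
      (fun _ => hk.comp measurable_prodMk_left) hv hu0 hut hA hf
  have hG_le : ∫⁻ z, G z ^ q ∂μ.prod ν ≤ B * ∫⁻ y, g y ^ q ∂ν := by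
    rw [lintegral_prod_symm _ (by fun_prop)]
    exact lintegral_lintegral_schurFactor_rpow_le (k := fun y x => k x y) hpq.symm.pos
      (fun _ => hk.comp measurable_prodMk_right) hu hv0 hvt hB hg
  have hFG : ∫⁻ x, ∫⁻ y, k x y * f x * g y ∂ν ∂μ = ∫⁻ z, (F * G) z ∂μ.prod ν := by
    rw [lintegral_prod _ (by fun_prop)]
    refine lintegral_congr_ae ?_
    filter_upwards [hu0, hut] with x hx0 hxt
    refine lintegral_congr_ae ?_
    filter_upwards [hv0, hvt] with y hy0 hyt
    calc k x y * f x * g y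
        = k x y ^ (1 / p + 1 / q) * f x * g y * ((u x)⁻¹ * u x) * ((v y)⁻¹ * v y) := by
          rw [one_div, one_div, hpq.inv_add_inv_eq_one, ENNReal.rpow_one,
            ENNReal.inv_mul_cancel hx0 hxt, ENNReal.inv_mul_cancel hy0 hyt, mul_one, mul_one]
      _ = (F * G) (x, y) := by
          rw [ENNReal.rpow_add_of_nonneg _ _ hpq.one_div_nonneg hpq.symm.one_div_nonneg]
          simp only [F, G, Pi.mul_apply]
          ring
  rw [hFG]
  calc ∫⁻ z, (F * G) z ∂μ.prod ν
      ≤ (∫⁻ z, F z ^ p ∂μ.prod ν) ^ (1 / p) * (∫⁻ z, G z ^ q ∂μ.prod ν) ^ (1 / q) :=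
        ENNReal.lintegral_mul_le_Lp_mul_Lq _ hpq hF.aemeasurable hG.aemeasurable
    _ ≤ (A * ∫⁻ x, f x ^ p ∂μ) ^ (1 / p) * (B * ∫⁻ y, g y ^ q ∂ν) ^ (1 / q) := by
        gcongr
        exacts [hpq.one_div_nonneg, hpq.symm.one_div_nonneg]
    _ = _ := by
        rw [ENNReal.mul_rpow_of_nonneg _ _ hpq.one_div_nonneg,
          ENNReal.mul_rpow_of_nonneg _ _ hpq.symm.one_div_nonneg]
        ring

lemma lintegral_lintegral_mul_mul_le_of_le_const_mul {C : ℝ≥0∞} (hC : C ≠ ∞)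
    {k l : X → Y → ℝ≥0∞} (hkl : ∀ᵐ x ∂μ, ∀ᵐ y ∂ν, k x y ≤ C * l x y) (f : X → ℝ≥0∞)
    (g : Y → ℝ≥0∞) :
    ∫⁻ x, ∫⁻ y, k x y * f x * g y ∂ν ∂μ ≤ C * ∫⁻ x, ∫⁻ y, l x y * f x * g y ∂ν ∂μ := by
  simp only [← lintegral_const_mul' C _ hC, ← mul_assoc]
  refine lintegral_mono_ae (hkl.mono fun x hx => lintegral_mono_ae (hx.mono fun y hxy => ?_))
  gcongr

end SchurTest

section Rpow

lemma rpow_le_rpow_abs {a c : ℝ} (t : ℝ) (hc : 0 < c) (hca : c⁻¹ ≤ a) (hac : a ≤ c) :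
    a ^ t ≤ c ^ |t| := by
  have ha : 0 < a := (inv_pos.2 hc).trans_le hca
  rcases le_total 0 t with ht | ht
  · rw [abs_of_nonneg ht]
    exact Real.rpow_le_rpow ha.le hac ht
  · rw [abs_of_nonpos ht, Real.rpow_neg_eq_inv_rpow]
    exact Real.rpow_le_rpow_of_nonpos (inv_pos.2 hc) hca ht

lemma min_one_rpow_le {a c : ℝ} (t : ℝ) (ha : 0 < a) (hac : a ≤ c) (hc : 1 ≤ c) :
    min 1 a ^ t ≤ c ^ |t| * a ^ t := by
  have hc0 : 0 < c := zero_lt_one.trans_le hc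
  have hratio : (min 1 a / a) ^ t ≤ c ^ |t| := by
    refine rpow_le_rpow_abs t hc0 ?_ ?_
    · rw [le_div_iff₀ ha, inv_mul_eq_div]
      exact le_min ((div_le_one hc0).2 hac) (div_le_self ha.le hc)
    · exact ((div_le_one ha).2 (min_le_right 1 a)).trans hc
  rwa [Real.div_rpow (by positivity) ha.le, div_le_iff₀ (by positivity)] at hratio

lemma rpow_neg_le_rpow_mul_rpow_neg {c r w e : ℝ} (hc : 0 < c) (hr : 0 ≤ r) (hw : 0 < w)
    (hwr : w ≤ c * r) (he : 0 ≤ e) : r ^ (-e) ≤ c ^ e * w ^ (-e) := by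
  have h := Real.rpow_le_rpow_of_nonpos hw hwr (neg_nonpos.2 he)
  rwa [Real.mul_rpow hc.le hr, Real.rpow_neg hc.le, inv_mul_le_iff₀ (by positivity)] at h

lemma min_one_div_rpow_le_one {a r : ℝ} (t : ℝ) (hr : 0 ≤ r) (hra : r ≤ a) :
    min 1 (a / r) ^ t ≤ 1 := by
  rcases hr.eq_or_lt with rfl | hr
  · simpa using Real.zero_rpow_le_one t
  · rw [min_eq_left ((one_le_div hr).2 hra), Real.one_rpow]

lemma one_add_rpow_add_log_le {q δ z : ℝ} (hq : 0 ≤ q) (hδ : 0 < δ) (hz : 1 ≤ z) :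
    1 + z ^ q + Real.log z ≤ (2 + 1 / δ) * z ^ (q + δ) := by
  have hone : 1 ≤ z ^ (q + δ) := Real.one_le_rpow hz (by positivity)
  have hpow : z ^ q ≤ z ^ (q + δ) := Real.rpow_le_rpow_of_exponent_le hz (by linarith)
  have hlog : Real.log z ≤ 1 / δ * z ^ (q + δ) :=
    calc Real.log z ≤ z ^ δ / δ := Real.log_le_rpow_div (by linarith) hδ
      _ = 1 / δ * z ^ δ := by ring
      _ ≤ 1 / δ * z ^ (q + δ) := by
        gcongr
        linarith
  linarith

end Rpow

section Integrability

lemma integrableOn_Ioi_min_rpow_mul_max_rpow {a b : ℝ} (ha : -1 < a) (hb : b < -1) :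
    IntegrableOn (fun u : ℝ => min u 1 ^ a * max u 1 ^ b) (Ioi 0) := by
  rw [← Ioc_union_Ioi_eq_Ioi zero_le_one]
  refine IntegrableOn.union ?_ ?_
  · refine IntegrableOn.congr_fun (f := fun u => u ^ a)
      ((intervalIntegrable_iff_integrableOn_Ioc_of_le zero_le_one).1
        (intervalIntegral.intervalIntegrable_rpow' ha)) (fun u hu => ?_) measurableSet_Ioc
    simp only [min_eq_left hu.2, max_eq_right hu.2, Real.one_rpow, mul_one]
  · refine IntegrableOn.congr_fun (integrableOn_Ioi_rpow_of_lt hb zero_lt_one)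
      (fun u (hu : 1 < u) => ?_) measurableSet_Ioi
    simp only [min_eq_right hu.le, max_eq_left hu.le, Real.one_rpow, one_mul]

lemma integrable_init_mul_last {n : ℕ} {f : (Fin n → ℝ) → ℝ} {g : ℝ → ℝ} (hf : Integrable f)
    (hg : Integrable g) :
    Integrable fun z : EuclideanSpace ℝ (Fin (n + 1)) =>
      f (Fin.init z.ofLp) * g (z (Fin.last n)) := by
  have hprod : Integrable (fun w : ℝ × (Fin n → ℝ) => g w.1 * f w.2) := hg.mul_prod hf
  have hsplit := (volume_preserving_piFinSuccAbove (fun _ => ℝ) (Fin.last n)).comp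
    (PiLp.volume_preserving_ofLp (Fin (n + 1)))
  refine (hsplit.integrable_comp_of_integrable hprod).congr (.of_forall fun z => ?_)
  simp [mul_comm, MeasurableEquiv.piFinSuccAbove]

variable {E : Type*} [NormedAddCommGroup E] [NormedSpace ℝ E] [FiniteDimensional ℝ E]
  [MeasurableSpace E] [BorelSpace E] (μ : Measure E) [μ.IsAddHaarMeasure]

lemma integrableOn_ball_norm_rpow [Nontrivial E] {a : ℝ} (ha : -Module.finrank ℝ E < a) (R : ℝ) :
    IntegrableOn (fun x : E => ‖x‖ ^ a) (Metric.ball 0 R) μ := by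
  rw [integrableOn_fun_norm_addHaar μ (f := fun r => r ^ a)]
  have hrpow : IntegrableOn (fun r : ℝ => r ^ (Module.finrank ℝ E - 1 + a)) (Ioo 0 R) :=
    (intervalIntegral.intervalIntegrable_rpow' (by linarith)).1.mono_set Ioo_subset_Ioc_self
  refine hrpow.congr_fun (fun r hr => ?_) measurableSet_Ioo
  have hdim : ((Module.finrank ℝ E - 1 : ℕ) : ℝ) = Module.finrank ℝ E - 1 :=
    Nat.cast_pred Module.finrank_pos
  simp only [smul_eq_mul, Real.rpow_add hr.1, ← hdim, Real.rpow_natCast]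

lemma lintegral_eq_mul_lintegral_add_smul {r : ℝ} (hr : 0 < r) (x : E) (F : E → ℝ≥0∞) :
    ∫⁻ y, F y ∂μ = ENNReal.ofReal (r ^ Module.finrank ℝ E) * ∫⁻ z, F (x + r • z) ∂μ := by
  have hmap : ∫⁻ z, F (x + r • z) ∂μ = ∫⁻ y, F (x + y) ∂(μ.map (r • ·)) :=
    ((Homeomorph.smulOfNeZero r hr.ne').measurableEmbedding.lintegral_map fun y => F (x + y)).symm
  rw [hmap, Measure.map_addHaar_smul μ hr.ne', lintegral_smul_measure, smul_eq_mul, ← mul_assoc,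
    ← ENNReal.ofReal_mul (by positivity), abs_of_pos (by positivity),
    mul_inv_cancel₀ (by positivity), ENNReal.ofReal_one, one_mul, lintegral_add_left_eq_self]

lemma setLIntegral_eq_mul_setLIntegral_add_smul {r : ℝ} (hr : 0 < r) (x : E) (F : E → ℝ≥0∞)
    {s : Set E} (hs : MeasurableSet s) :
    ∫⁻ y in s, F y ∂μ =
      ENNReal.ofReal (r ^ Module.finrank ℝ E) *
        ∫⁻ z in (fun z => x + r • z) ⁻¹' s, F (x + r • z) ∂μ := by
  rw [← lintegral_indicator hs, lintegral_eq_mul_lintegral_add_smul μ hr x,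
    ← lintegral_indicator (hs.preimage (by fun_prop))]
  rfl

end Integrability

section Kernel

/-- The comparison kernel
`|x - y| ^ (β - D) * (1 ∧ (x_d ∧ y_d) / |x - y|) ^ p * (1 ∧ (x_d ∨ y_d) / |x - y|) ^ κ`, written as
a function of `r = |x - y|`, `u = x_d` and `v = y_d`, where `D` is the dimension and `β = αs/2`.
Unlike `rieszBound` it is given by one homogeneous formula; the exponent `κ` absorbs the growth
factor and the logarithm that `rieszBound` carries far from the diagonal. -/
noncomputable def rieszMajorant (D β p κ r u v : ℝ) : ℝ :=
  r ^ (β - D) * min 1 (min u v / r) ^ p * min 1 (max u v / r) ^ κ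

lemma rieszMajorant_comm (D β p κ r u v : ℝ) :
    rieszMajorant D β p κ r u v = rieszMajorant D β p κ r v u := by
  rw [rieszMajorant, min_comm u, max_comm u, rieszMajorant]

lemma rieszMajorant_nonneg {D β p κ r u v : ℝ} (hr : 0 ≤ r) (hu : 0 ≤ u) (hv : 0 ≤ v) :
    0 ≤ rieszMajorant D β p κ r u v := by
  unfold rieszMajorant
  positivity

lemma rieszMajorant_smul {c r : ℝ} (hc : 0 < c) (hr : 0 ≤ r) (D β p κ u v : ℝ) :
    rieszMajorant D β p κ (c * r) (c * u) (c * v) = c ^ (β - D) * rieszMajorant D β p κ r u v := by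
  simp only [rieszMajorant, ← mul_min_of_nonneg _ _ hc.le, ← mul_max_of_nonneg _ _ hc.le,
    mul_div_mul_left _ _ hc.ne', Real.mul_rpow hc.le hr, mul_assoc]

lemma rieszMajorant_of_le_max {r u v : ℝ} (hr : 0 < r) (h : r ≤ max u v) (D β p κ : ℝ) :
    rieszMajorant D β p κ r u v = r ^ (β - D) * min 1 (min (u / r) (v / r)) ^ p := by
  rw [rieszMajorant, min_eq_left ((one_le_div hr).2 h), Real.one_rpow, mul_one,
    min_div_div_right hr.le]

lemma rieszMajorant_of_max_le {r u v : ℝ} (hu : 0 < u) (hv : 0 < v) (h : max u v ≤ r)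
    (D β p κ : ℝ) :
    rieszMajorant D β p κ r u v =
      r ^ (β - D) * (u * v / r ^ 2) ^ p * (r / max u v) ^ (p - κ) := by
  have hmax : 0 < max u v := lt_max_of_lt_left hu
  have hr : 0 < r := hmax.trans_le h
  have hmin_le : min u v ≤ r := min_le_max.trans h
  have hprod : u * v / r ^ 2 = (min u v / r) * (max u v / r) := by
    rw [div_mul_div_comm, min_mul_max, sq]
  have hpow : (max u v / r) ^ κ = (max u v / r) ^ p * (r / max u v) ^ (p - κ) := by
    rw [← inv_div (max u v) r, ← Real.rpow_neg_eq_inv_rpow, ← Real.rpow_add (by positivity)]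
    congr 1
    ring
  rw [rieszMajorant, min_eq_right ((div_le_one hr).2 hmin_le), min_eq_right ((div_le_one hr).2 h),
    hprod, Real.mul_rpow (by positivity) (by positivity), hpow]
  ring

lemma rieszMajorant_le_of_max_le_mul {c r u v : ℝ} (hc : 1 ≤ c) (hr : 0 < r) (hu : 0 < u)
    (hv : 0 < v) (h : max u v ≤ c * r) (D β p κ : ℝ) :
    rieszMajorant D β p κ r u v ≤
      c ^ |p| * c ^ |κ| * (r ^ (β - D) * (min u v / r) ^ p * (max u v / r) ^ κ) := by
  have hmin : min 1 (min u v / r) ^ p ≤ c ^ |p| * (min u v / r) ^ p :=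
    min_one_rpow_le p (by positivity) ((div_le_iff₀ hr).2 (min_le_max.trans h)) hc
  have hmax : min 1 (max u v / r) ^ κ ≤ c ^ |κ| * (max u v / r) ^ κ :=
    min_one_rpow_le κ (by positivity) ((div_le_iff₀ hr).2 h) hc
  calc rieszMajorant D β p κ r u v
      ≤ r ^ (β - D) * (c ^ |p| * (min u v / r) ^ p) * (c ^ |κ| * (max u v / r) ^ κ) := by
        unfold rieszMajorant
        gcongr
    _ = _ := by ring

lemma rieszMajorant_one_mul_rpow_le_of_le_half {r u : ℝ} (hr : 0 ≤ r) (hr' : r ≤ 1 / 2)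
    (hur : |u - 1| ≤ r) (D β p κ γ : ℝ) :
    rieszMajorant D β p κ r u 1 * u ^ (-γ) ≤ 2 ^ |γ| * r ^ (β - D) := by
  obtain ⟨hu_ge, hu_le⟩ := abs_le.1 hur
  have hmin : min 1 (min u 1 / r) ^ p ≤ 1 :=
    min_one_div_rpow_le_one p hr (le_min (by linarith) (by linarith))
  have hmax : min 1 (max u 1 / r) ^ κ ≤ 1 :=
    min_one_div_rpow_le_one κ hr (le_max_of_le_right (by linarith))
  have hu0 : 0 ≤ u := by linarith
  have hu : u ^ (-γ) ≤ 2 ^ |γ| := by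
    rw [← abs_neg γ]
    exact rpow_le_rpow_abs _ two_pos (by linarith) (by linarith)
  calc rieszMajorant D β p κ r u 1 * u ^ (-γ) ≤ (r ^ (β - D) * 1 * 1) * 2 ^ |γ| := by
        unfold rieszMajorant
        gcongr
    _ = 2 ^ |γ| * r ^ (β - D) := by ring

/- Far from the diagonal the kernel is comparable to a pure power of `r` times powers of `u ∧ 1` and
`u ∨ 1`. The power of `r` is shared between the two lower bounds `3 r ≥ 1 + t` and `3 r ≥ u ∨ 1`. -/
lemma exists_rieszMajorant_one_mul_rpow_le_of_half_le (D β p κ γ : ℝ) {b : ℝ} (hb : 0 ≤ b)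
    (hbD : b ≤ D + p + κ - β) :
    ∃ C : ℝ, ∀ r t u : ℝ, 1 / 2 ≤ r → 0 ≤ t → t ≤ r → 0 < u → u - 1 ≤ r →
      rieszMajorant D β p κ r u 1 * u ^ (-γ) ≤
        C * ((1 + t) ^ (-b) * (min u 1 ^ (p - γ) * max u 1 ^ (β - D - p + b - γ))) := by
  obtain ⟨a, ha⟩ : ∃ a, a = D + p + κ - β - b := ⟨_, rfl⟩
  have ha0 : 0 ≤ a := by linarith
  refine ⟨3 ^ |p| * 3 ^ |κ| * (3 ^ b * 3 ^ a), fun r t u hr ht htr hu hur => ?_⟩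
  have hr0 : 0 < r := by linarith
  have hM_le : max u 1 ≤ 3 * r := max_le (by linarith) (by linarith)
  have hmajorant := rieszMajorant_le_of_max_le_mul (by norm_num) hr0 hu one_pos hM_le D β p κ
  set m := min u 1
  set M := max u 1
  have hm0 : 0 < m := lt_min hu one_pos
  have hM0 : 0 < M := lt_max_of_lt_right one_pos
  have hu_eq : u ^ (-γ) = m ^ (-γ) * M ^ (-γ) := by
    rw [← Real.mul_rpow hm0.le hM0.le, min_mul_max, mul_one]
  have hr_pow : r ^ (β - D) = r ^ (-b) * r ^ (-a) * r ^ p * r ^ κ := by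
    simp only [← Real.rpow_add hr0, ha]
    congr 1
    ring
  have hM_pow : M ^ (β - D - p + b - γ) = M ^ (-a) * M ^ κ * M ^ (-γ) := by
    simp only [← Real.rpow_add hM0, ha]
    congr 1
    ring
  calc rieszMajorant D β p κ r u 1 * u ^ (-γ)
      ≤ 3 ^ |p| * 3 ^ |κ| * (r ^ (β - D) * (m / r) ^ p * (M / r) ^ κ) * u ^ (-γ) := by gcongr
    _ = 3 ^ |p| * 3 ^ |κ| * (r ^ (-b) * r ^ (-a)) * (m ^ p * m ^ (-γ) * (M ^ κ * M ^ (-γ))) := by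
        rw [hu_eq, hr_pow, Real.div_rpow hm0.le hr0.le, Real.div_rpow hM0.le hr0.le]
        field_simp
    _ ≤ 3 ^ |p| * 3 ^ |κ| * ((3 ^ b * (1 + t) ^ (-b)) * (3 ^ a * M ^ (-a))) *
          (m ^ p * m ^ (-γ) * (M ^ κ * M ^ (-γ))) := by
        gcongr
        · exact rpow_neg_le_rpow_mul_rpow_neg three_pos hr0.le (by linarith) (by linarith) hb
        · exact rpow_neg_le_rpow_mul_rpow_neg three_pos hr0.le hM0 hM_le ha0
    _ = 3 ^ |p| * 3 ^ |κ| * (3 ^ b * 3 ^ a) *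
          ((1 + t) ^ (-b) * (m ^ (p - γ) * M ^ (β - D - p + b - γ))) := by
        rw [hM_pow, sub_eq_add_neg p, Real.rpow_add hm0]
        ring

end Kernel

section HalfSpace

variable {d : ℕ} {hd : 1 ≤ d}

/-- The half-space `ℝ₊^d`. -/
abbrev upperHalfSpace (d : ℕ) (hd : 1 ≤ d) : Set (EuclideanSpace ℝ (Fin d)) :=
  {x | 0 < lastCoord d hd x}

@[fun_prop]
lemma measurable_lastCoord : Measurable (lastCoord d hd) := by
  unfold lastCoord
  fun_prop

lemma measurableSet_upperHalfSpace : MeasurableSet (upperHalfSpace d hd) :=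
  measurableSet_lt measurable_const measurable_lastCoord

lemma lastCoord_add_smul_of_eq {x : EuclideanSpace ℝ (Fin d)} {v : ℝ} (hx : lastCoord d hd x = v)
    (z : EuclideanSpace ℝ (Fin d)) :
    lastCoord d hd (x + v • z) = v * (1 + lastCoord d hd z) := by
  rw [mul_one_add, ← hx]
  rfl

lemma abs_lastCoord_le_norm (z : EuclideanSpace ℝ (Fin d)) : |lastCoord d hd z| ≤ ‖z‖ :=
  PiLp.norm_apply_le z _

lemma exists_rieszBound_le_rieszMajorant {α p s κ : ℝ} (hκp : κ < p)
    (hκ : κ < α * (1 + s / 2) - p) :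
    ∃ C : ℝ, 0 < C ∧ ∀ x ∈ upperHalfSpace d hd, ∀ y ∈ upperHalfSpace d hd, x ≠ y →
      rieszBound d hd α p s x y ≤
        C * rieszMajorant d (α * s / 2) p κ (dist x y) (lastCoord d hd x) (lastCoord d hd y) := by
  obtain ⟨q, hq⟩ : ∃ q, q = max 0 (2 * p - α * (1 + s / 2)) := ⟨_, rfl⟩
  obtain ⟨δ, hδ⟩ : ∃ δ, δ = p - κ - q := ⟨_, rfl⟩
  have hδ0 : 0 < δ := by
    rw [hδ, sub_pos, hq]
    exact max_lt (by linarith) (by linarith)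
  refine ⟨2 + 1 / δ, by positivity, fun x (hx : 0 < lastCoord d hd x) y
    (hy : 0 < lastCoord d hd y) hxy => ?_⟩
  have hr : 0 < dist x y := dist_pos.2 hxy
  rw [rieszBound]
  set u := lastCoord d hd x
  set v := lastCoord d hd y
  by_cases hnear : dist x y ≤ max u v
  · rw [if_pos hnear, ← rieszMajorant_of_le_max hr hnear _ _ _ κ]
    exact le_mul_of_one_le_left (rieszMajorant_nonneg hr.le hx.le hy.le)
      (by linarith [one_div_pos.2 hδ0])
  · have hfar : max u v < dist x y := not_le.1 hnear
    have hratio : 1 ≤ dist x y / max u v := (one_le_div (lt_max_of_lt_left hx)).2 hfar.le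
    have hbracket : 1 + (dist x y / max u v) ^ q + (if p = α * (1 + s / 2) / 2 then
          Real.log (dist x y / max u v) else 0) ≤
        (2 + 1 / δ) * (dist x y / max u v) ^ (p - κ) := by
      have hlog := one_add_rpow_add_log_le (hq ▸ le_max_left _ _) hδ0 hratio
      rw [hδ, add_sub_cancel, ← hδ] at hlog
      refine le_trans ?_ hlog
      gcongr
      split_ifs
      exacts [le_rfl, Real.log_nonneg hratio]
    rw [if_neg hnear, rieszMajorant_of_max_le hx hy hfar.le, ← hq, mul_left_comm]
    gcongr

/-- The integrand of `∫ G(e_d, y) y_d ^ (-γ) dy` for the kernel `G = rieszMajorant d β p κ`, in the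
variable `z = y - e_d`. -/
noncomputable def schurIntegrand (d : ℕ) (hd : 1 ≤ d) (β p κ γ : ℝ)
    (z : EuclideanSpace ℝ (Fin d)) : ℝ :=
  rieszMajorant d β p κ ‖z‖ (1 + lastCoord d hd z) 1 * (1 + lastCoord d hd z) ^ (-γ)

/-- The half-space `ℝ₊^d` in the variable `z = y - e_d` of `schurIntegrand`. -/
abbrev shiftedHalfSpace (d : ℕ) (hd : 1 ≤ d) : Set (EuclideanSpace ℝ (Fin d)) :=
  {z | 0 < 1 + lastCoord d hd z}

lemma measurableSet_shiftedHalfSpace : MeasurableSet (shiftedHalfSpace d hd) :=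
  measurableSet_lt measurable_const (by fun_prop)

/-- The integral `∫ G(e_d, y) y_d ^ (-γ) dy` over the half-space; by scaling it controls the same
integral with an arbitrary first argument of `G`. -/
noncomputable def schurIntegral (d : ℕ) (hd : 1 ≤ d) (β p κ γ : ℝ) : ℝ≥0∞ :=
  ∫⁻ z in shiftedHalfSpace d hd, ENNReal.ofReal (schurIntegrand d hd β p κ γ z)

lemma rieszMajorant_add_smul_mul_rpow (β p κ γ : ℝ) {x z : EuclideanSpace ℝ (Fin d)} {v : ℝ}
    (hv : 0 < v) (hx : lastCoord d hd x = v) (hz : z ∈ shiftedHalfSpace d hd) :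
    rieszMajorant d β p κ (dist x (x + v • z)) (lastCoord d hd (x + v • z)) v *
        lastCoord d hd (x + v • z) ^ (-γ) =
      v ^ (β - d - γ) * schurIntegrand d hd β p κ γ z := by
  have hdist : dist x (x + v • z) = v * ‖z‖ := by
    rw [dist_self_add_right, norm_smul, Real.norm_of_nonneg hv.le]
  have hscale := rieszMajorant_smul hv (norm_nonneg z) d β p κ (1 + lastCoord d hd z) 1
  rw [mul_one] at hscale
  rw [schurIntegrand, lastCoord_add_smul_of_eq hx, hdist, hscale, Real.mul_rpow hv.le (le_of_lt hz),
    sub_eq_add_neg _ γ, Real.rpow_add hv]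
  ring

lemma setLIntegral_rieszMajorant_mul_rpow (β p κ γ : ℝ) {x : EuclideanSpace ℝ (Fin d)}
    (hx : x ∈ upperHalfSpace d hd) :
    ∫⁻ y in upperHalfSpace d hd, ENNReal.ofReal (rieszMajorant d β p κ (dist x y)
        (lastCoord d hd y) (lastCoord d hd x) * lastCoord d hd y ^ (-γ)) =
      schurIntegral d hd β p κ γ * ENNReal.ofReal (lastCoord d hd x ^ (β - γ)) := by
  obtain ⟨v, hv⟩ : ∃ v, lastCoord d hd x = v := ⟨_, rfl⟩
  have hv0 : 0 < v := hv ▸ hx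
  have hpreimage : (fun z => x + v • z) ⁻¹' upperHalfSpace d hd = shiftedHalfSpace d hd := by
    ext z
    simp only [mem_preimage, mem_ofPred_eq, lastCoord_add_smul_of_eq hv,
      mul_pos_iff_of_pos_left hv0]
  have hpow : v ^ d * v ^ (β - d - γ) = v ^ (β - γ) := by
    rw [← Real.rpow_natCast, ← Real.rpow_add hv0]
    congr 1
    ring
  rw [setLIntegral_eq_mul_setLIntegral_add_smul volume hv0 x _ measurableSet_upperHalfSpace,
    finrank_euclideanSpace_fin, hpreimage, hv]
  calc ENNReal.ofReal (v ^ d) * ∫⁻ z in shiftedHalfSpace d hd,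
        ENNReal.ofReal (rieszMajorant d β p κ (dist x (x + v • z)) (lastCoord d hd (x + v • z)) v *
          lastCoord d hd (x + v • z) ^ (-γ))
      = ENNReal.ofReal (v ^ d) * ∫⁻ z in shiftedHalfSpace d hd,
          ENNReal.ofReal (v ^ (β - d - γ)) * ENNReal.ofReal (schurIntegrand d hd β p κ γ z) := by
        congr 1
        refine setLIntegral_congr_fun measurableSet_shiftedHalfSpace fun z hz => ?_
        simp only [rieszMajorant_add_smul_mul_rpow β p κ γ hv0 hv hz,
          ENNReal.ofReal_mul (Real.rpow_nonneg hv0.le _)]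
    _ = schurIntegral d hd β p κ γ * ENNReal.ofReal (v ^ (β - γ)) := by
        rw [lintegral_const_mul' _ _ ofReal_ne_top, ← mul_assoc,
          ← ENNReal.ofReal_mul (by positivity), hpow, mul_comm, schurIntegral]

lemma setLIntegral_schurIntegrand_inter_ball_lt_top {β : ℝ} (hβ : 0 < β) (p κ γ : ℝ) :
    ∫⁻ z in shiftedHalfSpace d hd ∩ Metric.ball 0 (1 / 2),
      ENNReal.ofReal (schurIntegrand d hd β p κ γ z) < ∞ := by
  have : Nonempty (Fin d) := Fin.pos_iff_nonempty.1 hd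
  have hint : IntegrableOn (fun z : EuclideanSpace ℝ (Fin d) => 2 ^ |γ| * ‖z‖ ^ (β - d))
      (shiftedHalfSpace d hd ∩ Metric.ball 0 (1 / 2)) := by
    refine Integrable.const_mul (IntegrableOn.mono_set ?_ inter_subset_right) _
    refine integrableOn_ball_norm_rpow volume ?_ (1 / 2)
    rw [finrank_euclideanSpace_fin]
    linarith
  refine lt_of_le_of_lt (setLIntegral_mono'
    (measurableSet_shiftedHalfSpace.inter measurableSet_ball) fun z hz => ?_) hint.lintegral_lt_top
  refine ENNReal.ofReal_le_ofReal (rieszMajorant_one_mul_rpow_le_of_le_half (norm_nonneg z)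
    (mem_ball_zero_iff.1 hz.2).le ?_ d β p κ γ)
  rw [add_sub_cancel_left]
  exact abs_lastCoord_le_norm z

lemma setLIntegral_schurIntegrand_diff_ball_lt_top {β p κ γ : ℝ} (hβκ : β < 1 + p + κ)
    (hγ : γ < 1 + p) (hβγ : β < p + γ) :
    ∫⁻ z in shiftedHalfSpace d hd \ Metric.ball 0 (1 / 2),
      ENNReal.ofReal (schurIntegrand d hd β p κ γ z) < ∞ := by
  obtain ⟨n, rfl⟩ : ∃ n, d = n + 1 := ⟨d - 1, by omega⟩
  -- `b` is the decay given to the `n` tangential variables: `n < b` makes their integral finite,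
  -- and `b < n + p + γ - β` leaves a decay faster than `u⁻¹` in the normal variable `u`.
  obtain ⟨b, hnb, hb⟩ : ∃ b : ℝ, n < b ∧ b < min (n + 1 + p + κ - β) (n + p + γ - β) :=
    exists_between (lt_min (by linarith) (by linarith))
  obtain ⟨hbκ, hbγ⟩ := lt_min_iff.1 hb
  have hn : (0 : ℝ) ≤ n := n.cast_nonneg
  obtain ⟨C, hC⟩ := exists_rieszMajorant_one_mul_rpow_le_of_half_le (n + 1 : ℕ) β p κ γ
    (hn.trans hnb.le) (by push_cast; exact hbκ.le)
  have htangential : Integrable (fun w : Fin n → ℝ => (1 + ‖w‖) ^ (-b)) :=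
    integrable_one_add_norm (by rwa [Module.finrank_fin_fun])
  have hnormal : IntegrableOn (fun u : ℝ => min u 1 ^ (p - γ) *
      max u 1 ^ (β - (n + 1 : ℕ) - p + b - γ)) (Ioi 0) :=
    integrableOn_Ioi_min_rpow_mul_max_rpow (by linarith) (by push_cast; linarith)
  have hdom := (integrable_init_mul_last htangential
    (((integrable_indicator_iff measurableSet_Ioi).2 hnormal).comp_add_left 1)).const_mul C
  refine lt_of_le_of_lt (setLIntegral_mono' (measurableSet_shiftedHalfSpace.diff measurableSet_ball)
    fun z hz => ?_) hdom.integrableOn.lintegral_lt_top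
  obtain ⟨hz, hz_norm⟩ := hz
  have hinit : ‖Fin.init z.ofLp‖ ≤ ‖z‖ :=
    (pi_norm_le_iff_of_nonneg (norm_nonneg z)).2 fun i => PiLp.norm_apply_le z i.castSucc
  have hlast : 1 + lastCoord (n + 1) hd z - 1 ≤ ‖z‖ := by
    rw [add_sub_cancel_left]
    exact (le_abs_self _).trans (abs_lastCoord_le_norm z)
  have hz_half : 1 / 2 ≤ ‖z‖ := by simpa using hz_norm
  refine ENNReal.ofReal_le_ofReal
    ((hC ‖z‖ ‖Fin.init z.ofLp‖ _ hz_half (norm_nonneg _) hinit hz hlast).trans_eq ?_)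
  rw [indicator_of_mem (by exact hz)]
  rfl

lemma schurIntegral_lt_top {β p κ γ : ℝ} (hβ : 0 < β) (hβκ : β < 1 + p + κ) (hγ : γ < 1 + p)
    (hβγ : β < p + γ) : schurIntegral d hd β p κ γ < ∞ := by
  rw [schurIntegral, ← lintegral_inter_add_sdiff _ _ measurableSet_ball]
  exact ENNReal.add_lt_top.2 ⟨setLIntegral_schurIntegrand_inter_ball_lt_top hβ p κ γ,
    setLIntegral_schurIntegrand_diff_ball_lt_top hβκ hγ hβγ⟩

lemma measurable_rieszMajorant_lastCoord (d : ℕ) (hd : 1 ≤ d) (β p κ : ℝ) :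
    Measurable fun z : EuclideanSpace ℝ (Fin d) × EuclideanSpace ℝ (Fin d) =>
      rieszMajorant d β p κ (dist z.1 z.2) (lastCoord d hd z.1) (lastCoord d hd z.2) := by
  unfold rieszMajorant
  fun_prop

lemma ofReal_rpow_neg_quarter_rpow_two {v : ℝ} (hv : 0 < v) :
    ENNReal.ofReal (v ^ (-(1 / 4) : ℝ)) ^ (2 : ℝ) = ENNReal.ofReal (v ^ (-(1 / 2) : ℝ)) := by
  rw [ENNReal.ofReal_rpow_of_pos (Real.rpow_pos_of_pos hv _), ← Real.rpow_mul hv.le]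
  norm_num

lemma setLIntegral_rpow_mul_rieszMajorant_mul_rpow_snd (β p κ γ : ℝ)
    {x : EuclideanSpace ℝ (Fin d)} (hx : x ∈ upperHalfSpace d hd) :
    ∫⁻ y in upperHalfSpace d hd, ENNReal.ofReal (lastCoord d hd x ^ (-β) *
        rieszMajorant d β p κ (dist x y) (lastCoord d hd x) (lastCoord d hd y)) *
        ENNReal.ofReal (lastCoord d hd y ^ (-γ)) =
      schurIntegral d hd β p κ γ * ENNReal.ofReal (lastCoord d hd x ^ (-γ)) := by
  have hx0 : 0 < lastCoord d hd x := hx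
  have hpow : lastCoord d hd x ^ (-β) * lastCoord d hd x ^ (β - γ) = lastCoord d hd x ^ (-γ) := by
    rw [← Real.rpow_add hx0, sub_eq_add_neg, neg_add_cancel_left]
  rw [← hpow, ENNReal.ofReal_mul (by positivity), mul_left_comm,
    ← setLIntegral_rieszMajorant_mul_rpow β p κ γ hx, ← lintegral_const_mul' _ _ ofReal_ne_top]
  refine setLIntegral_congr_fun measurableSet_upperHalfSpace fun y (hy : 0 < lastCoord d hd y) => ?_
  rw [rieszMajorant_comm, ← ENNReal.ofReal_mul' (Real.rpow_nonneg hy.le _), mul_assoc,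
    ENNReal.ofReal_mul (Real.rpow_nonneg hx0.le _)]

lemma setLIntegral_rpow_mul_rieszMajorant_mul_rpow_fst (β p κ γ : ℝ)
    {y : EuclideanSpace ℝ (Fin d)} (hy : y ∈ upperHalfSpace d hd) :
    ∫⁻ x in upperHalfSpace d hd, ENNReal.ofReal (lastCoord d hd x ^ (-β) *
        rieszMajorant d β p κ (dist x y) (lastCoord d hd x) (lastCoord d hd y)) *
        ENNReal.ofReal (lastCoord d hd x ^ (-γ)) =
      schurIntegral d hd β p κ (β + γ) * ENNReal.ofReal (lastCoord d hd y ^ (-γ)) := by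
  rw [← sub_add_cancel_left β γ, ← setLIntegral_rieszMajorant_mul_rpow β p κ _ hy]
  refine setLIntegral_congr_fun measurableSet_upperHalfSpace fun x (hx : 0 < lastCoord d hd x) => ?_
  simp only [sub_add_cancel_left]
  rw [dist_comm, ← ENNReal.ofReal_mul' (by positivity), mul_right_comm, ← Real.rpow_add hx,
    neg_add, mul_comm]

theorem exists_lintegral_rieszMajorant_mul_mul_le {β p κ : ℝ} (hβ : 0 < β) (hβκ : β < 1 + p + κ)
    (hβp : β < p + 1 / 2) :
    ∃ C : ℝ, 0 < C ∧ ∀ f g : EuclideanSpace ℝ (Fin d) → ℝ≥0∞, Measurable f → Measurable g →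
      ∫⁻ x in upperHalfSpace d hd, ∫⁻ y in upperHalfSpace d hd,
          ENNReal.ofReal (lastCoord d hd x ^ (-β) *
            rieszMajorant d β p κ (dist x y) (lastCoord d hd x) (lastCoord d hd y)) * f x * g y ≤
        ENNReal.ofReal C * (∫⁻ x in upperHalfSpace d hd, f x ^ 2) ^ ((1 : ℝ) / 2) *
          (∫⁻ y in upperHalfSpace d hd, g y ^ 2) ^ ((1 : ℝ) / 2) := by
  set A := schurIntegral d hd β p κ (1 / 2)
  set B := schurIntegral d hd β p κ (β + 1 / 2)
  have hA : A ≠ ∞ := (schurIntegral_lt_top hβ hβκ (by linarith) hβp).ne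
  have hB : B ≠ ∞ := (schurIntegral_lt_top hβ hβκ (by linarith) (by linarith)).ne
  have hAB : A ^ ((1 : ℝ) / 2) * B ^ ((1 : ℝ) / 2) ≠ ∞ :=
    ENNReal.mul_ne_top (by simp [hA]) (by simp [hB])
  set w : EuclideanSpace ℝ (Fin d) → ℝ≥0∞ := fun x =>
    ENNReal.ofReal (lastCoord d hd x ^ (-(1 / 4) : ℝ))
  have hw : Measurable w := by fun_prop
  have hmem : ∀ᵐ x ∂volume.restrict (upperHalfSpace d hd), x ∈ upperHalfSpace d hd :=
    ae_restrict_mem measurableSet_upperHalfSpace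
  have hw0 : ∀ᵐ x ∂volume.restrict (upperHalfSpace d hd), w x ≠ 0 :=
    hmem.mono fun x hx => (ENNReal.ofReal_pos.2 (Real.rpow_pos_of_pos hx _)).ne'
  have hw_top : ∀ᵐ x ∂volume.restrict (upperHalfSpace d hd), w x ≠ ∞ :=
    .of_forall fun _ => ofReal_ne_top
  have hw_sq {x} (hx : x ∈ upperHalfSpace d hd) :
      w x ^ (2 : ℝ) = ENNReal.ofReal (lastCoord d hd x ^ (-(1 / 2) : ℝ)) :=
    ofReal_rpow_neg_quarter_rpow_two hx
  refine ⟨(A ^ ((1 : ℝ) / 2) * B ^ ((1 : ℝ) / 2)).toReal + 1, by positivity, fun f g hf hg => ?_⟩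
  have hschur := lintegral_lintegral_mul_mul_le_of_schur Real.HolderConjugate.two_two
    (k := fun x y => ENNReal.ofReal (lastCoord d hd x ^ (-β) *
      rieszMajorant d β p κ (dist x y) (lastCoord d hd x) (lastCoord d hd y))) (A := A) (B := B)
    (by have := measurable_rieszMajorant_lastCoord d hd β p κ; fun_prop) hw hw hw0 hw_top hw0 hw_top
    (hmem.mono fun x hx => ?_) (hmem.mono fun y hy => ?_) hf hg
  · simp only [ENNReal.rpow_two] at hschur
    refine hschur.trans ?_
    gcongr
    rw [← ENNReal.ofReal_toReal hAB]
    exact ENNReal.ofReal_le_ofReal (by simp)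
  · rw [hw_sq hx, ← setLIntegral_rpow_mul_rieszMajorant_mul_rpow_snd β p κ _ hx]
    exact (setLIntegral_congr_fun measurableSet_upperHalfSpace fun y hy => by
      simp only [hw_sq hy]).le
  · rw [hw_sq hy, ← setLIntegral_rpow_mul_rieszMajorant_mul_rpow_fst β p κ _ hy]
    exact (setLIntegral_congr_fun measurableSet_upperHalfSpace fun x hx => by
      simp only [hw_sq hx]).le

end HalfSpace

theorem stmt_15_general (d : ℕ) (hd : 1 ≤ d) {α p s : ℝ} (hα : 0 < α) (hs : 0 < s)
    (hsp : s < (1 + 2 * p) / α) :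
    ∃ C : ℝ, 0 < C ∧ ∀ f g : EuclideanSpace ℝ (Fin d) → ℝ≥0∞, Measurable f → Measurable g →
      ∫⁻ x in {x | 0 < lastCoord d hd x}, ∫⁻ y in {y | 0 < lastCoord d hd y},
          ENNReal.ofReal (lastCoord d hd x ^ (-(α * s / 2)) * rieszBound d hd α p s x y)
            * f x * g y ≤
        ENNReal.ofReal C * (∫⁻ x in {x | 0 < lastCoord d hd x}, f x ^ 2) ^ ((1 : ℝ) / 2)
          * (∫⁻ y in {y | 0 < lastCoord d hd y}, g y ^ 2) ^ ((1 : ℝ) / 2) := by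
  have hβ : 0 < α * s / 2 := by positivity
  have hβp : α * s / 2 < p + 1 / 2 := by linarith [(lt_div_iff₀' hα).1 hsp]
  obtain ⟨κ, hκ, hκ'⟩ : ∃ κ, α * s / 2 - 1 - p < κ ∧ κ < min p (α * (1 + s / 2) - p) :=
    exists_between (lt_min (by linarith) (by linarith))
  obtain ⟨hκp, hκα⟩ := lt_min_iff.1 hκ'
  obtain ⟨C₁, hC₁, hbound⟩ := exists_rieszBound_le_rieszMajorant (hd := hd) hκp hκα
  obtain ⟨C₂, hC₂, hmajorant⟩ :=
    exists_lintegral_rieszMajorant_mul_mul_le (hd := hd) (κ := κ) hβ (by linarith) hβp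
  have hle : ∀ᵐ x ∂volume.restrict (upperHalfSpace d hd),
      ∀ᵐ y ∂volume.restrict (upperHalfSpace d hd),
        ENNReal.ofReal (lastCoord d hd x ^ (-(α * s / 2)) * rieszBound d hd α p s x y) ≤
          ENNReal.ofReal C₁ * ENNReal.ofReal (lastCoord d hd x ^ (-(α * s / 2)) *
            rieszMajorant d (α * s / 2) p κ (dist x y) (lastCoord d hd x) (lastCoord d hd y)) := by
    have : Nonempty (Fin d) := Fin.pos_iff_nonempty.1 hd
    filter_upwards [ae_restrict_mem measurableSet_upperHalfSpace] with x hx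
    filter_upwards [ae_restrict_mem measurableSet_upperHalfSpace, Measure.ae_ne _ x] with y hy hyx
    rw [← ENNReal.ofReal_mul hC₁.le, mul_left_comm]
    exact ENNReal.ofReal_le_ofReal (mul_le_mul_of_nonneg_left (hbound x hx y hy hyx.symm)
      (Real.rpow_nonneg (le_of_lt hx) _))
  refine ⟨C₁ * C₂, by positivity, fun f g hf hg => ?_⟩
  refine (lintegral_lintegral_mul_mul_le_of_le_const_mul ofReal_ne_top hle f g).trans ?_
  rw [ENNReal.ofReal_mul hC₁.le]
  simp only [mul_assoc (ENNReal.ofReal C₁)]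
  gcongr
  exact hmajorant f g hf hg

/-- Generalized Hardy inequality via Riesz kernel bounds: the integral operator with
kernel `x_d^{-αs/2} G(x,y)` is bounded on `L²(ℝ₊^d)` for
`s ∈ (0, min{(1+2p)/α, 2d/α})`, `p ∈ ((α-1)/2, α)`, `α ∈ (0,2)`. -/
theorem stmt_15 (d : ℕ) (hd : 1 ≤ d) (α p s : ℝ) (hα1 : 0 < α) (hα2 : α < 2)
    (hp1 : (α - 1) / 2 < p) (hp2 : p < α)
    (hs1 : 0 < s) (hs2 : s < min ((1 + 2 * p) / α) (2 * d / α)) :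
    ∃ C : ℝ, 0 < C ∧ ∀ f g : EuclideanSpace ℝ (Fin d) → ℝ≥0∞,
      Measurable f → Measurable g →
      (∫⁻ x in {x | 0 < lastCoord d hd x}, ∫⁻ y in {y | 0 < lastCoord d hd y},
          ENNReal.ofReal ((lastCoord d hd x) ^ (-(α * s / 2)) * rieszBound d hd α p s x y)
            * f x * g y)
        ≤ ENNReal.ofReal C
            * (∫⁻ x in {x | 0 < lastCoord d hd x}, f x ^ 2) ^ ((1:ℝ)/2)
            * (∫⁻ y in {y | 0 < lastCoord d hd y}, g y ^ 2) ^ ((1:ℝ)/2) :=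
  stmt_15_general d hd hα1 hs1 (hs2.trans_le (min_le_left _ _))
end

section
/- Let α ∈ (0,1), d ≥ 1, p ≥ 0, R ≥ 1. Suppose v : ℝ^d → ℝ is supported in the closed upper half-space and satisfies |v(y)| ≤ (1 ∧ |y|^{−d−α})(1 ∧ y_d)^p, and χ : ℝ^d → [0,1] satisfies χ = 1 on {|x| ≤ R}, χ = 0 on {|x| ≥ 2R}, and |∇χ| ≤ C/R. Then for all x ∈ ℝ₊^d, |∫_{ℝ^d} (χ(x) − χ(y)) |x−y|^{−d−α} v(y) dy| ≤ C' (1_{|x|≤R} R^{−d−2α} + 1_{|x|>R} |x|^{−d−α}), with C' depending only on d, α, p, C. Consequently the L²(ℝ₊^d) norm of this function of x is at most a constant times R^{−α−d/2}. -/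
open MeasureTheory Set

/-!
Write `s = d + α`. Since `χ` is `C / R`-Lipschitz with values in `[0, 1]`, the kernel
`|χ x - χ y| |x - y|^{-s}` is dominated by the convolution kernel
`min (1, C |x - y| / R) |x - y|^{-s}`, which is integrable because `0 < α < 1` and has total mass of
order `R^{-α}` by scaling. If `|x| ≤ R`, only `|y| > R` contributes, where `|v y| ≤ R^{-s}`. If
`|x| > R`, then either `|y| ≥ |x| / 2`, so that `v y` is of order `|x|^{-s}` and the kernel is
integrated, or `|x - y| ≥ |x| / 2`, so that the kernel is of order `|x|^{-s}` and `v` is integrated.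
Both cases give the bound `max (R, |x|)^{-s}` up to a constant, whose `L²` norm scales like
`R^{d / 2 - s}`.
-/

open Module

section Profiles

variable {E : Type*} [NormedAddCommGroup E]

/-- The radial kernel `min (1, L |z|) |z|^{-s}`, the convolution kernel which dominates
`|χ x - χ y| |x - y|^{-s}` at `z = x - y` when `χ` is `L`-Lipschitz with oscillation at most `1`. -/
noncomputable def truncatedKernel (s L : ℝ) (z : E) : ℝ :=
  min 1 (L * ‖z‖) * ‖z‖ ^ (-s)

lemma truncatedKernel_nonneg {s L : ℝ} (hL : 0 ≤ L) (z : E) : 0 ≤ truncatedKernel s L z := by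
  unfold truncatedKernel
  positivity

lemma truncatedKernel_eq_rpow_mul_smul [NormedSpace ℝ E] {s L : ℝ} (hL : 0 < L) (z : E) :
    truncatedKernel s L z = L ^ s * truncatedKernel s 1 (L • z) := by
  have hrpow : L ^ s * (L * ‖z‖) ^ (-s) = ‖z‖ ^ (-s) := by
    rw [Real.mul_rpow hL.le (norm_nonneg z), ← mul_assoc, ← Real.rpow_add hL, add_neg_cancel,
      Real.rpow_zero, one_mul]
  rw [truncatedKernel, truncatedKernel, norm_smul, Real.norm_of_nonneg hL.le, one_mul,
    mul_left_comm, hrpow]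

lemma max_norm_rpow_neg_eq_rpow_mul_smul [NormedSpace ℝ E] {s R : ℝ} (hR : 0 < R) (x : E) :
    max R ‖x‖ ^ (-s) = R ^ (-s) * max 1 ‖R⁻¹ • x‖ ^ (-s) := by
  rw [← Real.mul_rpow hR.le (by positivity), mul_max_of_nonneg _ _ hR.le, mul_one, norm_smul,
    norm_inv, Real.norm_of_nonneg hR.le, mul_inv_cancel_left₀ hR.ne']

lemma mul_norm_sub_rpow_mul_le {s L a b : ℝ} {x y : E} (hs : 0 ≤ s) (hL : 0 ≤ L) (hx : x ≠ 0)
    (ha0 : 0 ≤ a) (ha : a ≤ min 1 (L * ‖x - y‖)) (hb0 : 0 ≤ b) (hb : b ≤ max 1 ‖y‖ ^ (-s)) :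
    a * ‖x - y‖ ^ (-s) * b ≤
      (‖x‖ / 2) ^ (-s) * (truncatedKernel s L (x - y) + max 1 ‖y‖ ^ (-s)) := by
  have hx' : 0 < ‖x‖ / 2 := half_pos (norm_pos_iff.2 hx)
  have hker0 := truncatedKernel_nonneg (s := s) hL (x - y)
  rcases le_or_gt (‖x‖ / 2) ‖y‖ with hy | hy
  · have hker : a * ‖x - y‖ ^ (-s) ≤ truncatedKernel s L (x - y) :=
      mul_le_mul_of_nonneg_right ha (by positivity)
    have hbx : b ≤ (‖x‖ / 2) ^ (-s) := hb.trans
      (Real.rpow_le_rpow_of_nonpos hx' (hy.trans (le_max_right _ _)) (by linarith))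
    rw [mul_comm]
    exact mul_le_mul hbx (by linarith) (by positivity) (by positivity)
  · have hxy : ‖x‖ / 2 ≤ ‖x - y‖ := by linarith [norm_sub_norm_le x y]
    have hkerx : a * ‖x - y‖ ^ (-s) ≤ 1 * (‖x‖ / 2) ^ (-s) :=
      mul_le_mul (ha.trans (min_le_left _ _))
        (Real.rpow_le_rpow_of_nonpos hx' hxy (by linarith)) (by positivity) zero_le_one
    rw [one_mul] at hkerx
    exact mul_le_mul hkerx (by linarith) hb0 (by positivity)

lemma integral_truncatedKernel_nonneg [MeasurableSpace E] (μ : Measure E) {s L : ℝ} (hL : 0 ≤ L) :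
    0 ≤ ∫ z, truncatedKernel s L z ∂μ :=
  integral_nonneg (truncatedKernel_nonneg hL)

end Profiles

lemma integrableOn_Ioi_min_one_mul_rpow {b : ℝ} (hb : -2 < b) (hb' : b < -1) :
    IntegrableOn (fun r : ℝ => min 1 r * r ^ b) (Ioi 0) := by
  rw [← Ioc_union_Ioi_eq_Ioi zero_le_one]
  refine IntegrableOn.union ?near_zero ?near_infinity
  case near_zero =>
    have hint : IntegrableOn (fun r : ℝ => r ^ (1 + b)) (Ioc 0 1) :=
      (intervalIntegral.intervalIntegrable_rpow' (by linarith)).1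
    refine hint.congr_fun (fun r hr => ?_) measurableSet_Ioc
    simp only [min_eq_right hr.2, Real.rpow_add hr.1, Real.rpow_one]
  case near_infinity =>
    refine (integrableOn_Ioi_rpow_of_lt hb' one_pos).congr_fun (fun r hr => ?_) measurableSet_Ioi
    simp only [min_eq_left (mem_Ioi.1 hr).le, one_mul]

lemma ite_rpow_le_max_rpow {R t a b : ℝ} (hR : 1 ≤ R) (hab : a ≤ b) :
    (if t ≤ R then R ^ a else t ^ b) ≤ max R t ^ b := by
  split_ifs with ht
  · rw [max_eq_left ht]
    exact Real.rpow_le_rpow_of_exponent_le hR hab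
  · rw [max_eq_right (not_le.1 ht).le]

section LTwo

variable {X : Type*} [MeasurableSpace X] {μ : Measure X} {f : X → ℝ}

lemma eLpNorm_two_sq_eq_lintegral : eLpNorm f 2 μ ^ 2 = ∫⁻ x, ‖f x ^ 2‖ₑ ∂μ := by
  simpa only [NNReal.coe_ofNat, ENNReal.coe_ofNat, ENNReal.rpow_ofNat, enorm_pow] using
    eLpNorm_nnreal_pow_eq_lintegral (f := f) (μ := μ) (p := 2) two_ne_zero

lemma eLpNorm_two_le_ofReal_sqrt_integral {g : X → ℝ} (hfg : ∀ x, f x ^ 2 ≤ g x)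
    (hg : Integrable g μ) : eLpNorm f 2 μ ≤ ENNReal.ofReal √(∫ x, g x ∂μ) := by
  have hg0 : ∀ x, 0 ≤ g x := fun x => (sq_nonneg _).trans (hfg x)
  refine (ENNReal.pow_le_pow_left_iff two_ne_zero).1 ?_
  rw [← ENNReal.ofReal_pow (Real.sqrt_nonneg _), Real.sq_sqrt (integral_nonneg hg0),
    ofReal_integral_eq_lintegral_ofReal hg (ae_of_all _ hg0), eLpNorm_two_sq_eq_lintegral]
  refine lintegral_mono fun x => ?_
  rw [Real.enorm_of_nonneg (sq_nonneg _)]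
  exact ENNReal.ofReal_le_ofReal (hfg x)

lemma sqrt_setIntegral_sq_le_of_eLpNorm_two_le {B : ℝ} (hB : 0 ≤ B)
    (hf : eLpNorm f 2 μ ≤ ENNReal.ofReal B) (S : Set X) : √(∫ x in S, f x ^ 2 ∂μ) ≤ B := by
  refine Real.sqrt_le_iff.2 ⟨hB, ?_⟩
  rw [← ENNReal.ofReal_le_ofReal_iff (sq_nonneg B), ENNReal.ofReal_pow hB,
    ← Real.enorm_of_nonneg (integral_nonneg fun x => sq_nonneg (f x))]
  calc ‖∫ x in S, f x ^ 2 ∂μ‖ₑ ≤ ∫⁻ x in S, ‖f x ^ 2‖ₑ ∂μ := enorm_integral_le_lintegral_enorm _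
    _ ≤ ∫⁻ x, ‖f x ^ 2‖ₑ ∂μ := setLIntegral_le_lintegral _ _
    _ = eLpNorm f 2 μ ^ 2 := eLpNorm_two_sq_eq_lintegral.symm
    _ ≤ ENNReal.ofReal B ^ 2 := by gcongr

end LTwo

section Haar

variable {E : Type*} [NormedAddCommGroup E] [NormedSpace ℝ E] [FiniteDimensional ℝ E]
  [MeasurableSpace E] [BorelSpace E] (μ : Measure E) [μ.IsAddHaarMeasure]

lemma integrable_truncatedKernel [Nontrivial E] {s L : ℝ} (hs : finrank ℝ E < s)
    (hs' : s < finrank ℝ E + 1) (hL : 0 < L) :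
    Integrable (truncatedKernel s L : E → ℝ) μ := by
  have hone : Integrable (truncatedKernel s 1 : E → ℝ) μ := by
    refine (integrable_fun_norm_addHaar μ (f := fun r => min 1 (1 * r) * r ^ (-s))).2 ?_
    refine (integrableOn_Ioi_min_one_mul_rpow (b := (finrank ℝ E : ℝ) - 1 - s)
      (by linarith) (by linarith)).congr_fun (fun r hr => ?_) measurableSet_Ioi
    have hpow : r ^ (finrank ℝ E - 1) * r ^ (-s) = r ^ ((finrank ℝ E : ℝ) - 1 - s) := by
      rw [← Real.rpow_natCast, ← Real.rpow_add hr, Nat.cast_pred finrank_pos, ← sub_eq_add_neg]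
    simp only [one_mul, smul_eq_mul]
    rw [mul_left_comm, hpow]
  simp_rw [funext (truncatedKernel_eq_rpow_mul_smul (E := E) (s := s) hL)]
  exact ((integrable_comp_smul_iff μ _ hL.ne').2 hone).const_mul _

lemma integral_truncatedKernel (s : ℝ) {L : ℝ} (hL : 0 < L) :
    ∫ z, truncatedKernel s L z ∂μ =
      L ^ (s - finrank ℝ E) * ∫ z, truncatedKernel s 1 z ∂μ := by
  simp_rw [truncatedKernel_eq_rpow_mul_smul (E := E) (s := s) hL]
  rw [integral_const_mul, Measure.integral_comp_smul_of_nonneg μ _ L (hR := hL.le), smul_eq_mul,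
    ← mul_assoc, Real.rpow_sub hL, Real.rpow_natCast, div_eq_mul_inv]

lemma integrable_max_norm_rpow_neg {s R : ℝ} (hs : finrank ℝ E < s) (hR : 0 < R) :
    Integrable (fun x => max R ‖x‖ ^ (-s)) μ := by
  have hone : Integrable (fun x : E => max 1 ‖x‖ ^ (-s)) μ := by
    refine ((integrable_one_add_norm hs).const_mul (2⁻¹ ^ (-s))).mono'
      (Measurable.aestronglyMeasurable (by fun_prop)) (ae_of_all _ fun x => ?_)
    have hle : 2⁻¹ * (1 + ‖x‖) ≤ max 1 ‖x‖ := by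
      linarith [le_max_left 1 ‖x‖, le_max_right 1 ‖x‖]
    rw [Real.norm_of_nonneg (by positivity), ← Real.mul_rpow (by positivity) (by positivity)]
    exact Real.rpow_le_rpow_of_nonpos (by positivity) hle
      (neg_nonpos.2 ((Nat.cast_nonneg _).trans hs.le))
  simp_rw [max_norm_rpow_neg_eq_rpow_mul_smul (E := E) (s := s) hR]
  exact ((integrable_comp_smul_iff μ _ (inv_ne_zero hR.ne')).2 hone).const_mul _

lemma integral_max_norm_rpow_neg (s : ℝ) {R : ℝ} (hR : 0 < R) :
    ∫ x, max R ‖x‖ ^ (-s) ∂μ = R ^ (finrank ℝ E - s) * ∫ x, max 1 ‖x‖ ^ (-s) ∂μ := by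
  simp_rw [max_norm_rpow_neg_eq_rpow_mul_smul (E := E) (s := s) hR]
  rw [integral_const_mul, Measure.integral_comp_inv_smul_of_nonneg μ (fun x => max 1 ‖x‖ ^ (-s))
    hR.le, smul_eq_mul, ← mul_assoc, ← Real.rpow_natCast, ← Real.rpow_add hR, neg_add_eq_sub]

lemma eLpNorm_two_le_of_abs_le_max_norm_rpow_neg {s R K : ℝ} (hs : finrank ℝ E < 2 * s)
    (hR : 0 < R) (hK : 0 ≤ K) {f : E → ℝ} (hf : ∀ x, |f x| ≤ K * max R ‖x‖ ^ (-s)) :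
    eLpNorm f 2 μ ≤ ENNReal.ofReal
      (K * √(∫ x, max 1 ‖x‖ ^ (-(2 * s)) ∂μ) * R ^ ((finrank ℝ E : ℝ) / 2 - s)) := by
  have hsq : ∀ x, f x ^ 2 ≤ K ^ 2 * max R ‖x‖ ^ (-(2 * s)) := fun x => by
    calc f x ^ 2 ≤ (K * max R ‖x‖ ^ (-s)) ^ 2 := sq_le_sq.2 ((hf x).trans (le_abs_self _))
      _ = K ^ 2 * max R ‖x‖ ^ (-(2 * s)) := by
          rw [mul_pow, ← Real.rpow_mul_natCast (by positivity)]
          congr 2; push_cast; ring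
  have hpow : R ^ (finrank ℝ E - 2 * s) = (R ^ ((finrank ℝ E : ℝ) / 2 - s)) ^ 2 := by
    rw [← Real.rpow_mul_natCast hR.le]
    congr 1; push_cast; ring
  refine (eLpNorm_two_le_ofReal_sqrt_integral hsq
    ((integrable_max_norm_rpow_neg μ hs hR).const_mul _)).trans_eq ?_
  rw [integral_const_mul, integral_max_norm_rpow_neg μ _ hR, hpow, Real.sqrt_mul (sq_nonneg K),
    Real.sqrt_sq hK, Real.sqrt_mul (sq_nonneg _), Real.sqrt_sq (by positivity)]
  ring_nf

end Haar

section Commutator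

variable {E : Type*} [NormedAddCommGroup E] [MeasurableSpace E]

/-- The value at `x` of the commutator of multiplication by `χ` with the integral operator of kernel
`|x - y|^{-s}`, applied to `v`. -/
noncomputable def cutoffCommutator (μ : Measure E) (s : ℝ) (χ v : E → ℝ) (x : E) : ℝ :=
  ∫ y, (χ x - χ y) * ‖x - y‖ ^ (-s) * v y ∂μ

lemma abs_cutoffCommutator_le_integral {μ : Measure E} {s : ℝ} {χ v g : E → ℝ} {x : E}
    (hg : Integrable g μ) (h : ∀ y, |χ x - χ y| * ‖x - y‖ ^ (-s) * |v y| ≤ g y) :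
    |cutoffCommutator μ s χ v x| ≤ ∫ y, g y ∂μ := by
  rw [cutoffCommutator, ← Real.norm_eq_abs]
  refine norm_integral_le_of_norm_le hg (ae_of_all _ fun y => ?_)
  rw [norm_mul, norm_mul, Real.norm_of_nonneg (Real.rpow_nonneg (norm_nonneg _) _)]
  exact h y

variable [NormedSpace ℝ E] (μ : Measure E)

/-- The constant in the pointwise bound of the commutator: the cut-off at scale `R` has Lipschitz
constant `C / R`, and the two integrals are the masses of the unit-scale kernel and of the
majorant of `v`. -/
noncomputable def commutatorConst (α C : ℝ) : ℝ :=
  2 ^ (finrank ℝ E + α) * (C ^ α * ∫ z, truncatedKernel (finrank ℝ E + α) 1 z ∂μ +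
    ∫ y, max 1 ‖y‖ ^ (-(finrank ℝ E + α)) ∂μ)

lemma commutatorConst_nonneg (α : ℝ) {C : ℝ} (hC : 0 ≤ C) : 0 ≤ commutatorConst μ α C := by
  have hM := integral_truncatedKernel_nonneg μ (s := finrank ℝ E + α) zero_le_one
  unfold commutatorConst
  positivity

lemma rpow_mul_integral_truncatedKernel_le_commutatorConst {α C : ℝ} (hα : 0 ≤ α) (hC : 0 ≤ C) :
    C ^ α * ∫ z, truncatedKernel (finrank ℝ E + α) 1 z ∂μ ≤ commutatorConst μ α C := by
  have hM := integral_truncatedKernel_nonneg μ (s := finrank ℝ E + α) zero_le_one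
  have htwo : (1 : ℝ) ≤ 2 ^ (finrank ℝ E + α) := Real.one_le_rpow one_le_two (by positivity)
  exact (le_add_of_nonneg_right (by positivity)).trans
    (le_mul_of_one_le_left (by positivity) htwo)

variable [FiniteDimensional ℝ E] [BorelSpace E] [Nontrivial E] [μ.IsAddHaarMeasure]
  {s L : ℝ} {χ v : E → ℝ} {x : E}

lemma abs_cutoffCommutator_le_of_abs_le (hs : finrank ℝ E < s) (hs' : s < finrank ℝ E + 1)
    (hL : 0 < L) (hχ : ∀ y, |χ x - χ y| ≤ min 1 (L * ‖x - y‖)) {B : ℝ} (hB : 0 ≤ B)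
    (hv : ∀ y, χ y ≠ χ x → |v y| ≤ B) :
    |cutoffCommutator μ s χ v x| ≤
      B * (L ^ (s - finrank ℝ E) * ∫ z, truncatedKernel s 1 z ∂μ) := by
  have hint := ((integrable_truncatedKernel μ hs hs' hL).comp_sub_left x).mul_const B
  rw [← integral_truncatedKernel (E := E) μ s hL, mul_comm,
    ← integral_sub_left_eq_self (truncatedKernel (E := E) s L) μ x, ← integral_mul_const]
  refine abs_cutoffCommutator_le_integral hint fun y => ?_
  have hker := truncatedKernel_nonneg (s := s) hL.le (x - y)
  by_cases hy : χ y = χ x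
  · simpa [hy] using mul_nonneg hker hB
  · exact mul_le_mul (mul_le_mul_of_nonneg_right (hχ y) (by positivity)) (hv y hy)
      (abs_nonneg _) hker

lemma abs_cutoffCommutator_le_half_norm_rpow (hs : finrank ℝ E < s) (hs' : s < finrank ℝ E + 1)
    (hL : 0 < L) (hx : x ≠ 0) (hχ : ∀ y, |χ x - χ y| ≤ min 1 (L * ‖x - y‖))
    (hv : ∀ y, |v y| ≤ max 1 ‖y‖ ^ (-s)) :
    |cutoffCommutator μ s χ v x| ≤
      (‖x‖ / 2) ^ (-s) * (L ^ (s - finrank ℝ E) * ∫ z, truncatedKernel s 1 z ∂μ +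
        ∫ y, max 1 ‖y‖ ^ (-s) ∂μ) := by
  have hker := (integrable_truncatedKernel μ hs hs' hL).comp_sub_left x
  have hw := integrable_max_norm_rpow_neg μ hs one_pos
  rw [← integral_truncatedKernel (E := E) μ s hL,
    ← integral_sub_left_eq_self (truncatedKernel (E := E) s L) μ x, ← integral_add hker hw,
    ← integral_const_mul]
  exact abs_cutoffCommutator_le_integral ((hker.add hw).const_mul _) fun y =>
    mul_norm_sub_rpow_mul_le ((Nat.cast_nonneg _).trans hs.le) hL.le hx (abs_nonneg _) (hχ y)
      (abs_nonneg _) (hv y)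

lemma abs_cutoffCommutator_le_of_norm_le {α C R : ℝ} (hα : 0 < α) (hα' : α < 1) (hC : 0 < C)
    (hR : 0 < R) (hv : ∀ y, |v y| ≤ max 1 ‖y‖ ^ (-(finrank ℝ E + α)))
    (hχ : ∀ y, |χ x - χ y| ≤ min 1 (C / R * ‖x - y‖)) (hχR : ∀ y, ‖y‖ ≤ R → χ y = χ x) :
    |cutoffCommutator μ (finrank ℝ E + α) χ v x| ≤
      commutatorConst μ α C * R ^ (-(finrank ℝ E + 2 * α)) := by
  have hvR : ∀ y, χ y ≠ χ x → |v y| ≤ R ^ (-(finrank ℝ E + α)) := fun y hy => by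
    have hyR : R < ‖y‖ := lt_of_not_ge (mt (hχR y) hy)
    exact (hv y).trans (Real.rpow_le_rpow_of_nonpos hR (hyR.le.trans (le_max_right _ _))
      (neg_nonpos.2 (by positivity)))
  have hpow : R ^ (-(finrank ℝ E + α)) * (C / R) ^ α =
      C ^ α * R ^ (-(finrank ℝ E + 2 * α)) := by
    rw [Real.div_rpow hC.le hR.le, mul_div_left_comm, ← Real.rpow_sub hR]
    congr 2; ring
  refine (abs_cutoffCommutator_le_of_abs_le μ (by linarith) (by linarith) (div_pos hC hR) hχ
    (by positivity) hvR).trans ?_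
  rw [add_sub_cancel_left, ← mul_assoc, hpow, mul_right_comm]
  gcongr
  exact rpow_mul_integral_truncatedKernel_le_commutatorConst μ hα.le hC.le

lemma abs_cutoffCommutator_le_norm_rpow {α C R : ℝ} (hα : 0 < α) (hα' : α < 1) (hC : 0 < C)
    (hR : 1 ≤ R) (hx : x ≠ 0) (hv : ∀ y, |v y| ≤ max 1 ‖y‖ ^ (-(finrank ℝ E + α)))
    (hχ : ∀ y, |χ x - χ y| ≤ min 1 (C / R * ‖x - y‖)) :
    |cutoffCommutator μ (finrank ℝ E + α) χ v x| ≤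
      commutatorConst μ α C * ‖x‖ ^ (-(finrank ℝ E + α)) := by
  have hR0 : 0 < R := one_pos.trans_le hR
  have hM := integral_truncatedKernel_nonneg μ (s := finrank ℝ E + α) zero_le_one
  have hhalf : (‖x‖ / 2) ^ (-(finrank ℝ E + α)) =
      2 ^ (finrank ℝ E + α) * ‖x‖ ^ (-(finrank ℝ E + α)) := by
    rw [Real.div_rpow (norm_nonneg x) zero_le_two, Real.rpow_neg zero_le_two, div_inv_eq_mul,
      mul_comm]
  refine (abs_cutoffCommutator_le_half_norm_rpow μ (by linarith) (by linarith) (div_pos hC hR0) hx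
    hχ hv).trans ?_
  rw [add_sub_cancel_left, hhalf, mul_right_comm, commutatorConst]
  gcongr
  exact div_le_self hC.le hR

theorem stmt_19_general {α C : ℝ} (hα : 0 < α) (hα' : α < 1) (hC : 0 < C) :
    ∃ C' : ℝ, 0 < C' ∧ ∀ R : ℝ, 1 ≤ R → ∀ v χ : E → ℝ,
      (∀ y, |v y| ≤ max 1 ‖y‖ ^ (-(finrank ℝ E + α))) →
      (∀ x y, |χ x - χ y| ≤ min 1 (C / R * ‖x - y‖)) →
      (∀ x, ‖x‖ ≤ R → χ x = 1) →
      (∀ x, |cutoffCommutator μ (finrank ℝ E + α) χ v x| ≤ C' *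
        (if ‖x‖ ≤ R then R ^ (-(finrank ℝ E + 2 * α)) else ‖x‖ ^ (-(finrank ℝ E + α)))) ∧
      eLpNorm (cutoffCommutator μ (finrank ℝ E + α) χ v) 2 μ ≤
        ENNReal.ofReal (C' * R ^ (-α - (finrank ℝ E : ℝ) / 2)) := by
  set K := commutatorConst μ α C
  set H := ∫ x, max 1 ‖x‖ ^ (-(2 * (finrank ℝ E + α))) ∂μ
  have hK : 0 ≤ K := commutatorConst_nonneg μ α hC.le
  refine ⟨max 1 (max K (K * √H)), by positivity, fun R hR v χ hv hχ hχR => ?_⟩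
  have hR0 : 0 < R := one_pos.trans_le hR
  have hpointwise : ∀ x, |cutoffCommutator μ (finrank ℝ E + α) χ v x| ≤ K *
      (if ‖x‖ ≤ R then R ^ (-(finrank ℝ E + 2 * α)) else ‖x‖ ^ (-(finrank ℝ E + α))) := by
    intro x
    split_ifs with hx
    · exact abs_cutoffCommutator_le_of_norm_le μ hα hα' hC hR0 hv (hχ x)
        fun y hy => (hχR y hy).trans (hχR x hx).symm
    · exact abs_cutoffCommutator_le_norm_rpow μ hα hα' hC hR
        (norm_pos_iff.1 (hR0.trans (not_le.1 hx))) hv (hχ x)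
  have hmax : ∀ x, |cutoffCommutator μ (finrank ℝ E + α) χ v x| ≤
      K * max R ‖x‖ ^ (-(finrank ℝ E + α)) := fun x =>
    (hpointwise x).trans (by gcongr; exact ite_rpow_le_max_rpow hR (by linarith))
  refine ⟨fun x => (hpointwise x).trans ?_,
    (eLpNorm_two_le_of_abs_le_max_norm_rpow_neg μ (by linarith) hR0 hK hmax).trans ?_⟩
  · refine mul_le_mul_of_nonneg_right (le_max_of_le_right (le_max_left _ _)) ?_
    split_ifs <;> positivity
  · have hexp : (finrank ℝ E : ℝ) / 2 - (finrank ℝ E + α) = -α - finrank ℝ E / 2 := by ring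
    rw [hexp]
    gcongr
    exact le_max_of_le_right (le_max_right _ _)

end Commutator

lemma abs_le_max_one_norm_rpow_neg_of_tsupport_subset {d : ℕ} {hd : 1 ≤ d} {s p : ℝ} (hp : 0 ≤ p)
    {v : EuclideanSpace ℝ (Fin d) → ℝ} (hsupp : tsupport v ⊆ {y | 0 ≤ lastCoord d hd y})
    (hv : ∀ y, 0 ≤ lastCoord d hd y →
      |v y| ≤ min 1 (‖y‖ ^ (-s)) * min 1 (lastCoord d hd y) ^ p)
    (y : EuclideanSpace ℝ (Fin d)) : |v y| ≤ max 1 ‖y‖ ^ (-s) := by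
  by_cases hvy : v y = 0
  · rw [hvy, abs_zero]
    positivity
  have hy : 0 ≤ lastCoord d hd y := hsupp (subset_tsupport v hvy)
  have hweight : min 1 (lastCoord d hd y) ^ p ≤ 1 :=
    Real.rpow_le_one (le_min zero_le_one hy) (min_le_left _ _) hp
  refine ((hv y hy).trans (mul_le_of_le_one_right (by positivity) hweight)).trans ?_
  rcases le_total ‖y‖ 1 with h | h
  · simp [max_eq_left h]
  · simp [max_eq_right h]

lemma abs_sub_le_min_of_norm_fderiv_le {E : Type*} [NormedAddCommGroup E] [NormedSpace ℝ E]
    {χ : E → ℝ} {L : ℝ} (hχ : ∀ x, 0 ≤ χ x ∧ χ x ≤ 1) (hdiff : Differentiable ℝ χ)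
    (hgrad : ∀ x, ‖fderiv ℝ χ x‖ ≤ L) (x y : E) : |χ x - χ y| ≤ min 1 (L * ‖x - y‖) := by
  refine le_min (abs_sub_le_of_nonneg_of_le (hχ x).1 (hχ x).2 (hχ y).1 (hχ y).2) ?_
  exact convex_univ.norm_image_sub_le_of_norm_fderiv_le (𝕜 := ℝ) (fun z _ => hdiff z)
    (fun z _ => hgrad z) (mem_univ y) (mem_univ x)

/-- Radial cut-off commutator bound for the regional fractional Laplacian, case `α < 1`:
if `|v(y)| ≤ (1 ∧ |y|^{-d-α})(1 ∧ y_d)^p` with `v` supported in the closed half-space,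
and `χ` is a radial cut-off at scale `R ≥ 1` with `|∇χ| ≤ C/R`, then
`|∫ (χ(x)-χ(y)) |x-y|^{-d-α} v(y) dy| ≤ C' (1_{|x|≤R} R^{-d-2α} + 1_{|x|>R} |x|^{-d-α})`
for all `x ∈ ℝ₊^d`, and consequently its `L²(ℝ₊^d)` norm is at most `C' R^{-α-d/2}`. -/
theorem stmt_19 (d : ℕ) (hd : 1 ≤ d) (α p C : ℝ) (hα1 : 0 < α) (hα2 : α < 1)
    (hp : 0 ≤ p) (hC : 0 < C) :
    ∃ C' : ℝ, 0 < C' ∧ ∀ R : ℝ, 1 ≤ R →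
      ∀ v χ : EuclideanSpace ℝ (Fin d) → ℝ,
        tsupport v ⊆ {y | 0 ≤ lastCoord d hd y} →
        (∀ y, 0 ≤ lastCoord d hd y →
          |v y| ≤ min 1 (‖y‖ ^ (-((d : ℝ) + α))) * (min 1 (lastCoord d hd y)) ^ p) →
        (∀ x, 0 ≤ χ x ∧ χ x ≤ 1) →
        (∀ x, ‖x‖ ≤ R → χ x = 1) →
        (∀ x, 2 * R ≤ ‖x‖ → χ x = 0) →
        Differentiable ℝ χ →
        (∀ x, ‖fderiv ℝ χ x‖ ≤ C / R) →
        (∀ x : EuclideanSpace ℝ (Fin d), 0 < lastCoord d hd x →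
          |∫ y : EuclideanSpace ℝ (Fin d),
              (χ x - χ y) * ‖x - y‖ ^ (-((d : ℝ) + α)) * v y|
            ≤ C' * (if ‖x‖ ≤ R then R ^ (-((d : ℝ) + 2 * α)) else ‖x‖ ^ (-((d : ℝ) + α))))
        ∧ Real.sqrt (∫ x in {x | 0 < lastCoord d hd x},
              (∫ y : EuclideanSpace ℝ (Fin d),
                (χ x - χ y) * ‖x - y‖ ^ (-((d : ℝ) + α)) * v y) ^ 2)
            ≤ C' * R ^ (-α - (d : ℝ) / 2) := by
  have : Nonempty (Fin d) := ⟨⟨0, hd⟩⟩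
  obtain ⟨C', hC', hbound⟩ :=
    stmt_19_general (volume : Measure (EuclideanSpace ℝ (Fin d))) hα1 hα2 hC
  rw [finrank_euclideanSpace_fin] at hbound
  refine ⟨C', hC', fun R hR v χ hsupp hv hχ hχR _ hdiff hgrad => ?_⟩
  obtain ⟨hpointwise, hL2⟩ := hbound R hR v χ
    (abs_le_max_one_norm_rpow_neg_of_tsupport_subset hp hsupp hv)
    (abs_sub_le_min_of_norm_fderiv_le hχ hdiff hgrad) hχR
  exact ⟨fun x _ => hpointwise x, sqrt_setIntegral_sq_le_of_eLpNorm_two_le (by positivity) hL2 _⟩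
end
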